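/- Fix n ≥ 1 and 1 ≤ j ≤ n. There exists a constant C > 0, depending only on n, such that for every p ∈ (1, ∞), every d ≥ 1, every Lipschitz function f : ℝⁿ → ℝ with |f(ξ) − f(ξ̃)| ≤ ‖ξ − ξ̃‖₂ for all ξ, ξ̃ ∈ ℝⁿ, every map λ : {1,…,d} → ℝⁿ, and every matrix y ∈ M_d(ℂ), the matrix z ∈ M_d(ℂ) defined entrywise by z_{ik} = m_{ik}·y_{ik}, where m_{ik} = (f(λ(i)) − f(λ(k)))·(λ(i)_j − λ(k)_j)/‖λ(i) − λ(k)‖₂² if λ(i) ≠ λ(k) and m_{ik} = 0 if λ(i) = λ(k), satisfies ‖z‖_p ≤ C·(p²/(p−1))·‖y‖_p. -/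

import Mathlib

open Finset Matrix

/-- The singular values of a square complex matrix: the square roots of the eigenvalues of
the positive semidefinite Hermitian matrix `Mᴴ * M`. -/
noncomputable def singularValues {d : ℕ} (M : Matrix (Fin d) (Fin d) ℂ) : Fin d → ℝ :=
  fun i => Real.sqrt ((Matrix.isHermitian_conjTranspose_mul_self M).eigenvalues i)

/-- The Schatten `p`-norm of a square complex matrix: `(∑ᵢ σᵢ(M)^p)^(1/p)`. -/
noncomputable def schattenNorm {d : ℕ} (p : ℝ) (M : Matrix (Fin d) (Fin d) ℂ) : ℝ :=
  (∑ i, singularValues M i ^ p) ^ (1 / p)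

/-!
The symbol `(f(λᵢ) - f(λₖ)) (λᵢ - λₖ)ⱼ / ‖λᵢ - λₖ‖²` is the restriction of a function homogeneous of
degree `0` on `ℝⁿ × ℝ` to differences of points of the graph of `f`, and the proof transfers
martingale transforms to such symbols.

For dyadic matrix-valued martingales, Cuculescu's projections give the weak type `(1, 1)` bound for
the transforms by coefficients in `[-1, 1]`. Interpolation with `L²` bounds them on `Lᵖ(S_p)`
for `p = 3/2`, hence by duality for `p = 3`, and interpolating weak type `(1, 1)` with it gives
`C / (p - 1)` for all `1 < p ≤ 2`. The remaining `p` follow by duality, the symbol being symmetric.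

Conjugating a matrix by random diagonal unitaries turns a martingale transform into the Schur
multiplier with symbol `∑ₖ vₖ sin² gₖ ∏_{l > k} cos² g_l`, the `gₖ` being differences of angles.
Repeating infinitesimally small tosses whose coefficients and angles are drawn from a generator
`(n₁, n₂) = ∫ (v, 1) sin²⟨a, z⟩ dμ(z)`, `|v| ≤ 1`, sums a geometric series to the symbol `n₁ / n₂`.

By Fourier inversion an even Schwartz function vanishing at `0` is an integral of `sin²⟨a, z⟩`
against a density dominated by a rotation invariant one. Integrating over dilations with `dr / r²`
makes both entries homogeneous of degree `1`; the second becomes a multiple of `‖a‖`. A bump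
function on the cone `|t| ≤ ‖x‖`, which contains the differences of the graph, produces the symbol.
-/

namespace SchurMultiplier

open scoped ComplexOrder MatrixOrder InnerProductSpace

variable {d : ℕ} {A B : Matrix (Fin d) (Fin d) ℂ}

/-! ### Singular values -/

section SingularValues

lemma singularValues_nonneg (A : Matrix (Fin d) (Fin d) ℂ) (i : Fin d) :
    0 ≤ singularValues A i :=
  Real.sqrt_nonneg _

lemma singularValues_sq (A : Matrix (Fin d) (Fin d) ℂ) (i : Fin d) :
    singularValues A i ^ 2 = (isHermitian_conjTranspose_mul_self A).eigenvalues i :=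
  Real.sq_sqrt ((posSemidef_conjTranspose_mul_self A).eigenvalues_nonneg i)

/-- The diagonal matrix with real entries `e`, as a complex matrix. -/
noncomputable def realDiagonal {ι : Type*} [DecidableEq ι] (e : ι → ℝ) : Matrix ι ι ℂ :=
  diagonal fun i => (e i : ℂ)

lemma realDiagonal_mul {ι : Type*} [Fintype ι] [DecidableEq ι] (e f : ι → ℝ) :
    realDiagonal e * realDiagonal f = realDiagonal fun i => e i * f i := by
  simp [realDiagonal]

lemma conjTranspose_realDiagonal {ι : Type*} [DecidableEq ι] (e : ι → ℝ) :
    (realDiagonal e)ᴴ = realDiagonal e := by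
  simp [realDiagonal, diagonal_conjTranspose, Pi.star_def]

variable {U V : Matrix (Fin d) (Fin d) ℂ} {e : Fin d → ℝ}

lemma conjTranspose_mul_self_of_unitary {ι : Type*} [Fintype ι] [DecidableEq ι]
    {U : Matrix ι ι ℂ} (hU : U ∈ unitaryGroup ι ℂ) : Uᴴ * U = 1 :=
  mem_unitaryGroup_iff'.1 hU

lemma conjTranspose_mem_unitaryGroup {ι : Type*} [Fintype ι] [DecidableEq ι]
    {U : Matrix ι ι ℂ} (hU : U ∈ unitaryGroup ι ℂ) : Uᴴ ∈ unitaryGroup ι ℂ :=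
  Unitary.star_mem hU

lemma exists_unitary_diagonalization {ι : Type*} [Fintype ι] [DecidableEq ι]
    {A : Matrix ι ι ℂ} (hA : A.IsHermitian) :
    ∃ U ∈ unitaryGroup ι ℂ, A = U * realDiagonal hA.eigenvalues * Uᴴ :=
  ⟨hA.eigenvectorUnitary, hA.eigenvectorUnitary.2, hA.spectral_theorem⟩

lemma map_eigenvalues_eq {f : Fin d → ℝ} (hA : A.IsHermitian)
    (h : A.charpoly = (realDiagonal f).charpoly) :
    univ.val.map hA.eigenvalues = univ.val.map f := by
  have hroots : (realDiagonal f).charpoly.roots = univ.val.map fun i => (f i : ℂ) := by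
    rw [realDiagonal, charpoly_diagonal, Polynomial.roots_prod _ _
      (prod_ne_zero_iff.mpr fun i _ => Polynomial.X_sub_C_ne_zero _)]
    simp
  rw [← h, hA.roots_charpoly_eq_eigenvalues] at hroots
  simpa [Multiset.map_map, Function.comp_def] using congrArg (Multiset.map Complex.re) hroots

lemma conjTranspose_mul_self_unitary_mul_realDiagonal_mul (hU : U ∈ unitaryGroup (Fin d) ℂ) :
    (U * realDiagonal e * V)ᴴ * (U * realDiagonal e * V)
      = Vᴴ * realDiagonal (fun i => e i * e i) * V := by
  rw [← realDiagonal_mul]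
  simp only [conjTranspose_mul, conjTranspose_realDiagonal]
  calc _ = Vᴴ * (realDiagonal e * (Uᴴ * U) * realDiagonal e) * V := by
        simp only [Matrix.mul_assoc]
    _ = _ := by rw [conjTranspose_mul_self_of_unitary hU, Matrix.mul_one]

/-- Symmetric functions of the singular values can be read off any factorisation `U * D * V` with
`U`, `V` unitary and `D` real diagonal. -/
lemma sum_singularValues_eq (hU : U ∈ unitaryGroup (Fin d) ℂ) (hV : V ∈ unitaryGroup (Fin d) ℂ)
    (h : A = U * realDiagonal e * V) (F : ℝ → ℝ) :
    ∑ i, F (singularValues A i) = ∑ i, F |e i| := by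
  have hchar : (Aᴴ * A).charpoly = (realDiagonal fun i => e i * e i).charpoly := by
    rw [h, conjTranspose_mul_self_unitary_mul_realDiagonal_mul hU, charpoly_mul_comm,
      ← Matrix.mul_assoc, ← star_eq_conjTranspose, mem_unitaryGroup_iff.1 hV, Matrix.one_mul]
  have hmap := congrArg (fun s => (s.map fun x => F √x).sum)
    (map_eigenvalues_eq (isHermitian_conjTranspose_mul_self A) hchar)
  simp only [Multiset.map_map, Function.comp_def, Real.sqrt_mul_self_eq_abs] at hmap
  exact hmap

lemma exists_orthonormalBasis_smul_eq {ι 𝕜 E : Type*} [Fintype ι] [DecidableEq ι] [RCLike 𝕜]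
    [NormedAddCommGroup E] [InnerProductSpace 𝕜 E] [FiniteDimensional 𝕜 E]
    (hcard : Module.finrank 𝕜 E = Fintype.card ι) {c : ι → E} {s : ι → ℝ}
    (h : ∀ i k, ⟪c i, c k⟫_𝕜 = if i = k then (s i : 𝕜) ^ 2 else 0) :
    ∃ b : OrthonormalBasis ι 𝕜 E, ∀ i, c i = (s i : 𝕜) • b i := by
  have hs : ∀ {i}, s i ≠ 0 → (s i : 𝕜) ≠ 0 := fun hi => by exact_mod_cast hi
  have horth : Orthonormal 𝕜 ({i | s i ≠ 0}.domRestrict fun i => (s i : 𝕜)⁻¹ • c i) := by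
    rw [orthonormal_iff_ite]
    rintro ⟨i, hi⟩ ⟨k, hk⟩
    change ⟪(s i : 𝕜)⁻¹ • c i, (s k : 𝕜)⁻¹ • c k⟫_𝕜 = _
    rw [inner_smul_left, inner_smul_right, h]
    simp only [Subtype.mk.injEq, map_inv₀, RCLike.conj_ofReal]
    split_ifs with hik
    · subst hik
      field_simp [hs hi]
    · simp
  obtain ⟨b, hb⟩ := horth.exists_orthonormalBasis_extension_of_card_eq hcard
  refine ⟨b, fun i => ?_⟩
  by_cases hi : s i = 0
  · have hzero : c i = 0 := inner_self_eq_zero.1 (by rw [h]; simp [hi])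
    simp [hi, hzero]
  · rw [hb i hi, smul_inv_smul₀ (hs hi)]

lemma of_orthonormalBasis_mem_unitaryGroup {ι : Type*} [Fintype ι] [DecidableEq ι]
    (b : OrthonormalBasis ι ℂ (EuclideanSpace ℂ ι)) :
    (of fun l i => b i l) ∈ unitaryGroup ι ℂ := by
  rw [mem_unitaryGroup_iff']
  ext i k
  have := orthonormal_iff_ite.mp b.orthonormal i k
  simp only [PiLp.inner_apply, RCLike.inner_apply] at this
  simp only [star_eq_conjTranspose, Matrix.mul_apply, conjTranspose_apply, of_apply, one_apply,
    ← this]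
  exact sum_congr rfl fun l _ => mul_comm _ _

lemma exists_unitary_mul_realDiagonal {ι : Type*} [Fintype ι] [DecidableEq ι]
    {B : Matrix ι ι ℂ} {s : ι → ℝ} (h : Bᴴ * B = realDiagonal fun i => s i ^ 2) :
    ∃ U ∈ unitaryGroup ι ℂ, B = U * realDiagonal s := by
  let column : ι → EuclideanSpace ℂ ι := fun i => WithLp.toLp 2 fun l => B l i
  have hinner : ∀ i k, ⟪column i, column k⟫_ℂ = if i = k then (s i : ℂ) ^ 2 else 0 := by
    intro i k
    have hik := congrFun (congrFun h i) k
    simp only [Matrix.mul_apply, conjTranspose_apply, realDiagonal, diagonal_apply] at hik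
    simp only [column, PiLp.inner_apply, RCLike.inner_apply]
    push_cast at hik
    rw [← hik]
    exact sum_congr rfl fun l _ => mul_comm _ _
  obtain ⟨b, hb⟩ := exists_orthonormalBasis_smul_eq (by simp) hinner
  refine ⟨_, of_orthonormalBasis_mem_unitaryGroup b, ?_⟩
  ext l i
  simpa [realDiagonal, mul_diagonal, column, mul_comm] using congrArg (· l) (hb i)

lemma exists_singularValueDecomposition (A : Matrix (Fin d) (Fin d) ℂ) :
    ∃ U ∈ unitaryGroup (Fin d) ℂ, ∃ V ∈ unitaryGroup (Fin d) ℂ,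
      A = U * realDiagonal (singularValues A) * V := by
  obtain ⟨W, hW, hAW⟩ := exists_unitary_diagonalization (isHermitian_conjTranspose_mul_self A)
  have hWW := conjTranspose_mul_self_of_unitary hW
  have hsq : Aᴴ * A = W * realDiagonal (fun i => singularValues A i ^ 2) * Wᴴ := by
    simpa only [singularValues_sq] using hAW
  have hdiag : (A * W)ᴴ * (A * W) = realDiagonal fun i => singularValues A i ^ 2 := by
    rw [conjTranspose_mul, Matrix.mul_assoc, ← Matrix.mul_assoc Aᴴ, hsq]
    calc _ = (Wᴴ * W) * realDiagonal (fun i => singularValues A i ^ 2) * (Wᴴ * W) := by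
          simp only [Matrix.mul_assoc]
      _ = _ := by rw [hWW, Matrix.one_mul, Matrix.mul_one]
  obtain ⟨U, hU, hAU⟩ := exists_unitary_mul_realDiagonal hdiag
  refine ⟨U, hU, Wᴴ, conjTranspose_mem_unitaryGroup hW, ?_⟩
  rw [← hAU, Matrix.mul_assoc, ← star_eq_conjTranspose, mem_unitaryGroup_iff.1 hW, Matrix.mul_one]

end SingularValues

/-! ### Real trace and Hilbert-Schmidt norm -/

section Trace

variable {ι : Type*} [Fintype ι]

/-- The real part of the trace, as a real-linear functional. -/
noncomputable def reTrace : Matrix ι ι ℂ →ₗ[ℝ] ℝ :=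
  Complex.reLm ∘ₗ traceLinearMap ι ℝ ℂ

/-- The squared Hilbert-Schmidt norm `tr (Aᴴ * A)`. -/
noncomputable def hsNormSq (A : Matrix ι ι ℂ) : ℝ :=
  reTrace (Aᴴ * A)

lemma reTrace_mul_comm (A B : Matrix ι ι ℂ) : reTrace (A * B) = reTrace (B * A) := by
  simp [reTrace, trace_mul_comm A B]

lemma reTrace_conjTranspose (A : Matrix ι ι ℂ) : reTrace Aᴴ = reTrace A := by
  simp [reTrace, trace_conjTranspose]

lemma reTrace_nonneg {A : Matrix ι ι ℂ} (hA : 0 ≤ A) : 0 ≤ reTrace A :=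
  (Complex.le_def.mp (nonneg_iff_posSemidef.1 hA).trace_nonneg).1

lemma reTrace_mono {A B : Matrix ι ι ℂ} (h : A ≤ B) : reTrace A ≤ reTrace B := by
  rw [← sub_nonneg, ← map_sub]
  exact reTrace_nonneg (sub_nonneg.2 h)

lemma reTrace_mul_nonneg {A B : Matrix ι ι ℂ} (hA : 0 ≤ A) (hB : 0 ≤ B) :
    0 ≤ reTrace (A * B) := by
  classical
  obtain ⟨C, rfl⟩ := CStarAlgebra.nonneg_iff_eq_star_mul_self.1 hA
  rw [Matrix.mul_assoc, reTrace_mul_comm]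
  exact reTrace_nonneg (star_right_conjugate_nonneg hB C)

lemma hsNormSq_nonneg (A : Matrix ι ι ℂ) : 0 ≤ hsNormSq A :=
  reTrace_nonneg (star_mul_self_nonneg A)

lemma hsNormSq_add (A B : Matrix ι ι ℂ) :
    hsNormSq (A + B) = hsNormSq A + hsNormSq B + 2 * reTrace (Aᴴ * B) := by
  have hsymm : reTrace (Bᴴ * A) = reTrace (Aᴴ * B) := by
    rw [← reTrace_conjTranspose]
    simp
  simp only [hsNormSq, conjTranspose_add, Matrix.add_mul, Matrix.mul_add, map_add, hsymm]
  ring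

lemma hsNormSq_smul (c : ℝ) (A : Matrix ι ι ℂ) : hsNormSq (c • A) = c ^ 2 * hsNormSq A := by
  simp only [hsNormSq, conjTranspose_smul, Matrix.smul_mul, Matrix.mul_smul, map_smul,
    star_trivial, smul_eq_mul]
  ring

lemma hsNormSq_conjTranspose (A : Matrix ι ι ℂ) : hsNormSq Aᴴ = hsNormSq A := by
  rw [hsNormSq, hsNormSq, conjTranspose_conjTranspose, reTrace_mul_comm]

lemma hsNormSq_eq_sum_singularValues (A : Matrix (Fin d) (Fin d) ℂ) :
    hsNormSq A = ∑ i, singularValues A i ^ 2 := by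
  simp only [singularValues_sq]
  simpa [hsNormSq, reTrace] using
    congrArg Complex.re (isHermitian_conjTranspose_mul_self A).trace_eq_sum_eigenvalues

end Trace

/-! ### Counting singular values -/

section Counting

/-- The number of singular values of `A` exceeding `s`: the distribution function of `A` with
respect to the trace. -/
noncomputable def svCount (A : Matrix (Fin d) (Fin d) ℂ) (s : ℝ) : ℕ :=
  #{i | s < singularValues A i}

lemma svCount_eq_sum (A : Matrix (Fin d) (Fin d) ℂ) (s : ℝ) :
    (svCount A s : ℝ) = ∑ i, if s < singularValues A i then (1 : ℝ) else 0 := by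
  simp [svCount]

lemma svCount_mul_sq_le_hsNormSq (A : Matrix (Fin d) (Fin d) ℂ) {s : ℝ} (hs : 0 ≤ s) :
    svCount A s * s ^ 2 ≤ hsNormSq A := by
  rw [svCount_eq_sum, hsNormSq_eq_sum_singularValues, sum_mul]
  refine sum_le_sum fun i _ => ?_
  split_ifs with h
  · rw [one_mul]
    exact pow_le_pow_left₀ hs h.le 2
  · rw [zero_mul]
    positivity

lemma finrank_orthogonal_span_image {ι 𝕜 E : Type*} [Fintype ι] [RCLike 𝕜]
    [NormedAddCommGroup E] [InnerProductSpace 𝕜 E] (b : OrthonormalBasis ι 𝕜 E) (I : Finset ι) :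
    Module.finrank 𝕜 (Submodule.span 𝕜 (b '' I))ᗮ + #I = Fintype.card ι := by
  have := b.toBasis.finiteDimensional_of_finite
  have hI : Module.finrank 𝕜 (Submodule.span 𝕜 (b '' I)) = #I := by
    rw [Set.image_eq_range]
    simpa [Function.comp_def] using finrank_span_eq_card
      (b.orthonormal.linearIndependent.comp (Subtype.val : I → ι) Subtype.val_injective)
  rw [← Module.finrank_eq_card_basis b.toBasis,
    ← Submodule.finrank_add_finrank_orthogonal (Submodule.span 𝕜 (b '' I)), hI, add_comm]

lemma inner_eq_zero_of_mem_orthogonal_span_image {ι 𝕜 E : Type*} [RCLike 𝕜]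
    [NormedAddCommGroup E] [InnerProductSpace 𝕜 E] {b : ι → E} {I : Finset ι} {v : E}
    (hv : v ∈ (Submodule.span 𝕜 (b '' I))ᗮ) {i : ι} (hi : i ∈ I) : ⟪b i, v⟫_𝕜 = 0 :=
  Submodule.inner_right_of_mem_orthogonal
    (Submodule.subset_span (Set.mem_image_of_mem b (mem_coe.2 hi))) hv

/-- An orthonormal basis of right singular vectors of `A`. -/
noncomputable def rightSingularBasis (A : Matrix (Fin d) (Fin d) ℂ) :
    OrthonormalBasis (Fin d) ℂ (EuclideanSpace ℂ (Fin d)) :=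
  (isHermitian_conjTranspose_mul_self A).eigenvectorBasis

lemma inner_rightSingularBasis_conjTranspose_mul_self (A : Matrix (Fin d) (Fin d) ℂ) (i : Fin d)
    (v : EuclideanSpace ℂ (Fin d)) :
    ⟪rightSingularBasis A i, toEuclideanLin Aᴴ (toEuclideanLin A v)⟫_ℂ
      = (singularValues A i : ℂ) ^ 2 * ⟪rightSingularBasis A i, v⟫_ℂ := by
  have heig : toEuclideanLin Aᴴ (toEuclideanLin A (rightSingularBasis A i))
      = ((singularValues A i : ℂ) ^ 2) • rightSingularBasis A i := by
    have := (isHermitian_conjTranspose_mul_self A).mulVec_eigenvectorBasis i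
    rw [← singularValues_sq, ← mulVec_mulVec] at this
    ext l
    simpa [toLpLin_apply, rightSingularBasis] using congrFun this l
  rw [toEuclideanLin_conjTranspose_eq_adjoint, LinearMap.adjoint_inner_right,
    ← LinearMap.adjoint_inner_left, ← toEuclideanLin_conjTranspose_eq_adjoint, heig,
    inner_smul_left]
  simp

lemma norm_sq_toEuclideanLin (A : Matrix (Fin d) (Fin d) ℂ) (v : EuclideanSpace ℂ (Fin d)) :
    ‖toEuclideanLin A v‖ ^ 2
      = ∑ i, singularValues A i ^ 2 * ‖⟪rightSingularBasis A i, v⟫_ℂ‖ ^ 2 := by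
  have hinner : (‖toEuclideanLin A v‖ : ℂ) ^ 2
      = ⟪v, toEuclideanLin Aᴴ (toEuclideanLin A v)⟫_ℂ := by
    rw [toEuclideanLin_conjTranspose_eq_adjoint, LinearMap.adjoint_inner_right,
      inner_self_eq_norm_sq_to_K]
    rfl
  rw [← (rightSingularBasis A).sum_inner_mul_inner] at hinner
  simp only [inner_rightSingularBasis_conjTranspose_mul_self] at hinner
  have hterm : ∀ i, ⟪v, rightSingularBasis A i⟫_ℂ
      * ((singularValues A i : ℂ) ^ 2 * ⟪rightSingularBasis A i, v⟫_ℂ)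
        = ((singularValues A i ^ 2 * ‖⟪rightSingularBasis A i, v⟫_ℂ‖ ^ 2 : ℝ) : ℂ) := by
    intro i
    rw [← inner_conj_symm v]
    push_cast
    rw [← Complex.conj_mul']
    ring
  simp only [hterm] at hinner
  exact_mod_cast hinner

lemma exists_submodule_norm_le (A : Matrix (Fin d) (Fin d) ℂ) {s : ℝ} (hs : 0 ≤ s) :
    ∃ S : Submodule ℂ (EuclideanSpace ℂ (Fin d)), Module.finrank ℂ S + svCount A s = d ∧
      ∀ v ∈ S, ‖toEuclideanLin A v‖ ≤ s * ‖v‖ := by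
  refine ⟨_, (finrank_orthogonal_span_image (rightSingularBasis A)
    {i | s < singularValues A i}).trans (Fintype.card_fin d), fun v hv => ?_⟩
  refine abs_le_of_sq_le_sq' ?_ (by positivity) |>.2
  rw [norm_sq_toEuclideanLin, mul_pow, ← (rightSingularBasis A).sum_sq_norm_inner_right, mul_sum]
  refine sum_le_sum fun i _ => ?_
  by_cases hi : s < singularValues A i
  · simp [inner_eq_zero_of_mem_orthogonal_span_image hv (mem_filter.2 ⟨mem_univ i, hi⟩)]
  · have := pow_le_pow_left₀ (singularValues_nonneg A i) (not_lt.1 hi) 2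
    gcongr

lemma exists_submodule_lt_norm (A : Matrix (Fin d) (Fin d) ℂ) {s : ℝ} (hs : 0 ≤ s) :
    ∃ S : Submodule ℂ (EuclideanSpace ℂ (Fin d)), Module.finrank ℂ S = svCount A s ∧
      ∀ v ∈ S, v ≠ 0 → s * ‖v‖ < ‖toEuclideanLin A v‖ := by
  have hdim := finrank_orthogonal_span_image (rightSingularBasis A)
    {i | ¬ s < singularValues A i}
  have hcard := card_filter_add_card_filter_not (s := univ) fun i => s < singularValues A i
  refine ⟨_, by rw [card_univ] at hcard; exact Nat.add_right_cancel (hdim.trans hcard.symm),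
    fun v hv hne => lt_of_pow_lt_pow_left₀ 2 (norm_nonneg _) ?_⟩
  have hzero : ∀ i, ¬ s < singularValues A i → ⟪rightSingularBasis A i, v⟫_ℂ = 0 := fun i hi =>
    inner_eq_zero_of_mem_orthogonal_span_image hv (mem_filter.2 ⟨mem_univ i, hi⟩)
  have hpos : 0 < ∑ i, ‖⟪rightSingularBasis A i, v⟫_ℂ‖ ^ 2 := by
    rw [(rightSingularBasis A).sum_sq_norm_inner_right]
    positivity
  obtain ⟨k, -, hk⟩ := (sum_pos_iff_of_nonneg fun i _ => by positivity).1 hpos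
  rw [norm_sq_toEuclideanLin, mul_pow, ← (rightSingularBasis A).sum_sq_norm_inner_right, mul_sum]
  refine sum_lt_sum (fun i _ => ?_) ⟨k, mem_univ k, ?_⟩
  · by_cases hi : s < singularValues A i
    · gcongr
    · simp [hzero i hi]
  · have : s < singularValues A k := by
      by_contra hsk
      simp [hzero k hsk] at hk
    gcongr

lemma svCount_add_finrank_le {s : ℝ} (hs : 0 ≤ s) {S : Submodule ℂ (EuclideanSpace ℂ (Fin d))}
    (hS : ∀ v ∈ S, ‖toEuclideanLin A v‖ ≤ s * ‖v‖) : svCount A s + Module.finrank ℂ S ≤ d := by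
  obtain ⟨T, hT, hlt⟩ := exists_submodule_lt_norm A hs
  have hdisj : Disjoint T S := by
    rw [Submodule.disjoint_def]
    intro v hvT hvS
    by_contra hv
    exact (hlt v hvT hv).not_ge (hS v hvS)
  simpa [hT] using Submodule.finrank_add_finrank_le_of_disjoint hdisj

lemma svCount_add_le (A B : Matrix (Fin d) (Fin d) ℂ) {s t : ℝ} (hs : 0 ≤ s) (ht : 0 ≤ t) :
    svCount (A + B) (s + t) ≤ svCount A s + svCount B t := by
  obtain ⟨S, hS, hSle⟩ := exists_submodule_norm_le A hs
  obtain ⟨T, hT, hTle⟩ := exists_submodule_norm_le B ht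
  have hinf := svCount_add_finrank_le (A := A + B) (add_nonneg hs ht) (S := S ⊓ T) fun v hv => by
    rw [map_add, LinearMap.add_apply, add_mul]
    exact norm_add_le_of_le (hSle v hv.1) (hTle v hv.2)
  have hsup : Module.finrank ℂ (S ⊔ T : Submodule ℂ (EuclideanSpace ℂ (Fin d))) ≤ d := by
    simpa using Submodule.finrank_le (S ⊔ T)
  have := Submodule.finrank_sup_add_finrank_inf_eq S T
  omega

lemma svCount_zero_le_rank (A : Matrix (Fin d) (Fin d) ℂ) : svCount A 0 ≤ A.rank := by
  have hker := svCount_add_finrank_le (A := A) le_rfl (S := LinearMap.ker (toEuclideanLin A))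
    fun v hv => by simp [LinearMap.mem_ker.1 hv]
  have hrank : A.rank = Module.finrank ℂ (LinearMap.range (toEuclideanLin A)) :=
    A.rank_eq_finrank_range_toLin (PiLp.basisFun 2 ℂ _) (PiLp.basisFun 2 ℂ _)
  have := LinearMap.finrank_range_add_finrank_ker (toEuclideanLin A)
  simp only [finrank_euclideanSpace, Fintype.card_fin] at this
  omega

end Counting

/-! ### Projections and Cuculescu's construction -/

section Projections

variable {ι : Type*} [Fintype ι]

lemma hsNormSq_eq_add_of_isStarProjection [DecidableEq ι] {q : Matrix ι ι ℂ}
    (hq : IsStarProjection q) (A : Matrix ι ι ℂ) :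
    hsNormSq A = hsNormSq ((1 - q) * A) + hsNormSq (q * A) := by
  have hcross : ((1 - q) * A)ᴴ * (q * A) = 0 := by
    have hq' : (1 - q)ᴴ = 1 - q := hq.one_sub.isSelfAdjoint
    rw [conjTranspose_mul, hq', Matrix.mul_assoc, ← Matrix.mul_assoc (1 - q), hq.one_sub_mul_self,
      Matrix.zero_mul, Matrix.mul_zero]
  have hsplit : A = (1 - q) * A + q * A := by rw [← Matrix.add_mul, sub_add_cancel, Matrix.one_mul]
  conv_lhs => rw [hsplit, hsNormSq_add, hcross, map_zero, mul_zero, add_zero]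

lemma hsNormSq_projection_mul_le {q : Matrix ι ι ℂ} (hq : IsStarProjection q)
    (A : Matrix ι ι ℂ) : hsNormSq (q * A) ≤ hsNormSq A := by
  classical
  rw [hsNormSq_eq_add_of_isStarProjection hq A]
  exact le_add_of_nonneg_left (hsNormSq_nonneg _)

lemma hsNormSq_projection_mul {q A : Matrix ι ι ℂ} (hq : IsStarProjection q)
    (hA : IsSelfAdjoint A) : hsNormSq (q * A) = reTrace (q * A * A) := by
  have hq' : qᴴ = q := hq.isSelfAdjoint
  have hA' : Aᴴ = A := hA
  rw [hsNormSq, conjTranspose_mul, hA', hq', Matrix.mul_assoc, ← Matrix.mul_assoc q q,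
    hq.isIdempotentElem.eq, reTrace_mul_comm]

lemma hsNormSq_compression_le {q : Matrix ι ι ℂ} (hq : IsStarProjection q) (A : Matrix ι ι ℂ) :
    hsNormSq (q * A * q) ≤ hsNormSq A := by
  have hq' : qᴴ = q := hq.isSelfAdjoint
  calc hsNormSq (q * A * q) = hsNormSq (q * (q * A)ᴴ) := by
        rw [← hsNormSq_conjTranspose, conjTranspose_mul, hq']
    _ ≤ hsNormSq (q * A) := by
        rw [← hsNormSq_conjTranspose (q * A)]
        exact hsNormSq_projection_mul_le hq _
    _ ≤ hsNormSq A := hsNormSq_projection_mul_le hq A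

lemma rank_eq_reTrace_of_isIdempotentElem {q : Matrix ι ι ℂ} (hq : IsIdempotentElem q) :
    (q.rank : ℝ) = reTrace q := by
  classical
  have hlin : IsIdempotentElem (toLin' q) := by
    rw [IsIdempotentElem, Module.End.mul_eq_comp, ← toLin'_mul, hq.eq]
  have htrace := (LinearMap.IsIdempotentElem.isProj_range _ hlin).trace
  rw [trace_toLin'_eq] at htrace
  rw [rank_eq_finrank_range_toLin q (Pi.basisFun ℂ ι) (Pi.basisFun ℂ ι), toLin_eq_toLin',
    ← Complex.natCast_re, ← htrace]
  rfl

variable [DecidableEq ι]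

lemma svCount_le_svCount_compression_add {q : Matrix (Fin d) (Fin d) ℂ}
    (hq : IsIdempotentElem q) (A : Matrix (Fin d) (Fin d) ℂ) {s : ℝ} (hs : 0 ≤ s) :
    (svCount A s : ℝ) ≤ svCount (q * A * q) s + 2 * reTrace (1 - q) := by
  have hA : A = q * A * q + (q * A * (1 - q) + (1 - q) * A) := by noncomm_ring
  have hsplit : svCount A s ≤ svCount (q * A * q) s
      + (svCount (q * A * (1 - q)) 0 + svCount ((1 - q) * A) 0) := by
    conv_lhs => rw [hA, ← add_zero s]
    refine (svCount_add_le _ _ hs le_rfl).trans (Nat.add_le_add_left ?_ _)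
    simpa using svCount_add_le (q * A * (1 - q)) ((1 - q) * A) le_rfl le_rfl
  have hright : svCount (q * A * (1 - q)) 0 ≤ (1 - q).rank :=
    (svCount_zero_le_rank _).trans (rank_mul_le_right _ _)
  have hleft : svCount ((1 - q) * A) 0 ≤ (1 - q).rank :=
    (svCount_zero_le_rank _).trans (rank_mul_le_left _ _)
  have hle : (svCount A s : ℝ) ≤ svCount (q * A * q) s + 2 * (1 - q).rank := by
    exact_mod_cast (by omega : svCount A s ≤ svCount (q * A * q) s + 2 * (1 - q).rank)
  rwa [rank_eq_reTrace_of_isIdempotentElem hq.one_sub] at hle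

/-- The spectral projection of `A` onto the eigenvectors with eigenvalue exceeding `s`. -/
noncomputable def spectralProjection (A : Matrix ι ι ℂ) (s : ℝ) : Matrix ι ι ℂ :=
  cfc (fun x => if s < x then (1 : ℝ) else 0) A

lemma continuousOn_spectrum (A : Matrix ι ι ℂ) (f : ℝ → ℝ) : ContinuousOn f (spectrum ℝ A) :=
  finite_real_spectrum.continuousOn f

lemma isStarProjection_spectralProjection (A : Matrix ι ι ℂ) (s : ℝ) :
    IsStarProjection (spectralProjection A s) where
  isIdempotentElem := by
    rw [IsIdempotentElem, spectralProjection,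
      ← cfc_mul _ _ A (continuousOn_spectrum A _) (continuousOn_spectrum A _)]
    refine cfc_congr fun x _ => ?_
    split_ifs <;> simp
  isSelfAdjoint := cfc_predicate _ A

lemma commute_spectralProjection {A : Matrix ι ι ℂ} (hA : IsSelfAdjoint A) (s : ℝ) :
    Commute (spectralProjection A s) A := by
  have h := cfc_commute_cfc (fun x => if s < x then (1 : ℝ) else 0) id A
  rwa [cfc_id ℝ A] at h

lemma cfc_mul_self_eq {A : Matrix ι ι ℂ} (hA : IsSelfAdjoint A) (f : ℝ → ℝ) :
    cfc f A * A = cfc (fun x => f x * x) A := by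
  rw [cfc_mul f (fun x => x) A (continuousOn_spectrum A _) (continuousOn_spectrum A _),
    cfc_id' ℝ A]

lemma smul_spectralProjection_le {A : Matrix ι ι ℂ} (hA : IsSelfAdjoint A) (s : ℝ) :
    s • spectralProjection A s ≤ spectralProjection A s * A := by
  have hcont := continuousOn_spectrum A
  rw [spectralProjection, cfc_mul_self_eq hA, ← cfc_smul s _ A (hcont _)]
  refine cfc_mono (fun x _ => ?_) (hcont _) (hcont _)
  split_ifs with h
  · simpa using h.le
  · simp

lemma one_sub_spectralProjection_mul_le {A : Matrix ι ι ℂ} (hA : IsSelfAdjoint A) (s : ℝ) :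
    (1 - spectralProjection A s) * A ≤ s • (1 - spectralProjection A s) := by
  have hcont := continuousOn_spectrum A
  have hcompl : 1 - spectralProjection A s = cfc (fun x => 1 - if s < x then (1 : ℝ) else 0) A := by
    rw [cfc_sub _ _ A (hcont _) (hcont _), cfc_const_one ℝ A, spectralProjection]
  rw [hcompl, cfc_mul_self_eq hA, ← cfc_smul s _ A (hcont _)]
  refine cfc_mono (fun x _ => ?_) (hcont _) (hcont _)
  split_ifs with h
  · simp
  · simpa using h

lemma spectralProjection_eq_cfc_mul {A : Matrix ι ι ℂ} (hA : IsSelfAdjoint A) {s : ℝ}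
    (hs : 0 ≤ s) :
    spectralProjection A s = cfc (fun x => if s < x then x⁻¹ else 0) A * A := by
  rw [cfc_mul_self_eq hA]
  refine cfc_congr fun x _ => ?_
  split_ifs with h
  · exact (inv_mul_cancel₀ (hs.trans_lt h).ne').symm
  · simp

section Compression

variable {q m : Matrix ι ι ℂ} {s : ℝ}

lemma spectralProjection_compression_mul (hq : IsStarProjection q) (hm : IsSelfAdjoint m)
    (hs : 0 ≤ s) : spectralProjection (q * m * q) s * q = spectralProjection (q * m * q) s := by
  have hA : IsSelfAdjoint (q * m * q) := hm.conjugate_self hq.isSelfAdjoint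
  rw [spectralProjection_eq_cfc_mul hA hs]
  simp only [Matrix.mul_assoc, hq.isIdempotentElem.eq]

lemma mul_spectralProjection_compression (hq : IsStarProjection q) (hm : IsSelfAdjoint m)
    (hs : 0 ≤ s) : q * spectralProjection (q * m * q) s = spectralProjection (q * m * q) s := by
  simpa only [star_mul, hq.isSelfAdjoint.star_eq,
    (isStarProjection_spectralProjection _ s).isSelfAdjoint.star_eq]
    using congrArg star (spectralProjection_compression_mul hq hm hs)

lemma reTrace_spectralProjection_mul_compression (hq : IsStarProjection q) (hm : IsSelfAdjoint m)
    (hs : 0 ≤ s) : reTrace (spectralProjection (q * m * q) s * (q * m * q))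
      = reTrace (spectralProjection (q * m * q) s * m) := by
  rw [← Matrix.mul_assoc, ← Matrix.mul_assoc, spectralProjection_compression_mul hq hm hs,
    reTrace_mul_comm, ← Matrix.mul_assoc, mul_spectralProjection_compression hq hm hs]

/-- One step of Cuculescu's construction: the part of the projection `q` on which the compression
of `m` does not exceed `s`. -/
noncomputable def cutoffProjection (q m : Matrix ι ι ℂ) (s : ℝ) : Matrix ι ι ℂ :=
  q - spectralProjection (q * m * q) s

lemma mul_cutoffProjection (hq : IsStarProjection q) (hm : IsSelfAdjoint m) (hs : 0 ≤ s) :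
    q * cutoffProjection q m s = cutoffProjection q m s := by
  rw [cutoffProjection, Matrix.mul_sub, hq.isIdempotentElem.eq,
    mul_spectralProjection_compression hq hm hs]

lemma cutoffProjection_mul (hq : IsStarProjection q) (hm : IsSelfAdjoint m) (hs : 0 ≤ s) :
    cutoffProjection q m s * q = cutoffProjection q m s := by
  rw [cutoffProjection, Matrix.sub_mul, hq.isIdempotentElem.eq,
    spectralProjection_compression_mul hq hm hs]

lemma isStarProjection_cutoffProjection (hq : IsStarProjection q) (hm : IsSelfAdjoint m)
    (hs : 0 ≤ s) : IsStarProjection (cutoffProjection q m s) :=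
  (isStarProjection_spectralProjection _ s).sub_of_mul_eq_left hq
    (spectralProjection_compression_mul hq hm hs)

lemma smul_reTrace_sub_cutoffProjection_le (hq : IsStarProjection q) (hm : IsSelfAdjoint m)
    (hs : 0 ≤ s) : s * reTrace (q - cutoffProjection q m s)
      ≤ reTrace ((q - cutoffProjection q m s) * m) := by
  rw [cutoffProjection, sub_sub_cancel, ← reTrace_spectralProjection_mul_compression hq hm hs,
    ← smul_eq_mul, ← map_smul]
  exact reTrace_mono (smul_spectralProjection_le (hm.conjugate_self hq.isSelfAdjoint) s)

lemma cutoffProjection_compression_eq (hq : IsStarProjection q) (hm : IsSelfAdjoint m)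
    (hs : 0 ≤ s) : cutoffProjection q m s * m * cutoffProjection q m s
      = (1 - spectralProjection (q * m * q) s) * (q * m * q) := by
  have hcomm := (commute_spectralProjection (hm.conjugate_self hq.isSelfAdjoint) s).eq
  have hright := spectralProjection_compression_mul hq hm hs
  have hleft := mul_spectralProjection_compression hq hm hs
  set p := spectralProjection (q * m * q) s
  calc cutoffProjection q m s * m * cutoffProjection q m s
        = ((1 - p) * q) * m * (q * (1 - p)) := by
        rw [cutoffProjection, Matrix.sub_mul 1, Matrix.one_mul, Matrix.mul_sub q, Matrix.mul_one,
          hright, hleft]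
    _ = (1 - p) * (q * m * q * (1 - p)) := by simp only [Matrix.mul_assoc]
    _ = (1 - p) * (1 - p) * (q * m * q) := by
        rw [Matrix.mul_sub (q * m * q), ← hcomm, Matrix.mul_one, Matrix.mul_assoc (1 - p) (1 - p),
          Matrix.sub_mul 1 p (q * m * q), Matrix.one_mul]
    _ = (1 - p) * (q * m * q) := by
        rw [(isStarProjection_spectralProjection (q * m * q) s).one_sub.isIdempotentElem.eq]

lemma cutoffProjection_compression_le (hq : IsStarProjection q) (hm : IsSelfAdjoint m)
    (hs : 0 ≤ s) :
    cutoffProjection q m s * m * cutoffProjection q m s ≤ s • cutoffProjection q m s := by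
  have hA : IsSelfAdjoint (q * m * q) := hm.conjugate_self hq.isSelfAdjoint
  have h := hq.isSelfAdjoint.conjugate_le_conjugate (one_sub_spectralProjection_mul_le hA s)
  have hcompl : q * (1 - spectralProjection (q * m * q) s) = cutoffProjection q m s := by
    rw [Matrix.mul_sub, Matrix.mul_one, mul_spectralProjection_compression hq hm hs,
      cutoffProjection]
  rw [← cutoffProjection_compression_eq hq hm hs, Matrix.mul_smul, Matrix.smul_mul, hcompl,
    cutoffProjection_mul hq hm hs, Matrix.mul_assoc q, Matrix.mul_assoc _ _ q,
    cutoffProjection_mul hq hm hs, ← Matrix.mul_assoc, ← Matrix.mul_assoc,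
    mul_cutoffProjection hq hm hs] at h
  exact h

lemma hsNormSq_compression_le_add (hq : IsStarProjection q) (hm : IsSelfAdjoint m)
    (hs : 0 ≤ s) {c : ℝ} (hc : q * m * q ≤ c • q) :
    hsNormSq (q * m * q) ≤ hsNormSq (cutoffProjection q m s * m * cutoffProjection q m s)
      + c * reTrace ((q - cutoffProjection q m s) * m) := by
  have hA : IsSelfAdjoint (q * m * q) := hm.conjugate_self hq.isSelfAdjoint
  have hp := isStarProjection_spectralProjection (q * m * q) s
  have hpA : 0 ≤ spectralProjection (q * m * q) s * (q * m * q) :=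
    (smul_nonneg hs hp.nonneg).trans (smul_spectralProjection_le hA s)
  have hbound := reTrace_mul_nonneg hpA (sub_nonneg.mpr hc)
  have hAq : q * m * q * q = q * m * q := by rw [Matrix.mul_assoc, hq.isIdempotentElem.eq]
  rw [Matrix.mul_sub, map_sub, Matrix.mul_smul, map_smul, Matrix.mul_assoc _ _ q, hAq,
    smul_eq_mul, ← hsNormSq_projection_mul hp hA] at hbound
  rw [cutoffProjection_compression_eq hq hm hs, cutoffProjection, sub_sub_cancel,
    ← reTrace_spectralProjection_mul_compression hq hm hs, hsNormSq_eq_add_of_isStarProjection hp]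
  linarith

end Compression

end Projections

/-! ### Dyadic martingale transforms -/

/-- The probability space of `K` fair coin tosses, listed from the first toss on. -/
def DyadicSpace : ℕ → Type
  | 0 => Unit
  | K + 1 => Bool × DyadicSpace K

section Module

variable {E F : Type*} [AddCommGroup E] [Module ℝ E] [AddCommGroup F] [Module ℝ F]

/-- The expectation on `DyadicSpace K`. -/
noncomputable def dyadicMean : (K : ℕ) → (DyadicSpace K → E) → E
  | 0, x => x ()
  | K + 1, x => (1 / 2 : ℝ) •
      (dyadicMean K (fun ω => x (false, ω)) + dyadicMean K (fun ω => x (true, ω)))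

/-- The martingale transform `∑ₖ vₖ (𝔼ₖ₊₁ x - 𝔼ₖ x)`, where `𝔼ₖ` is the conditional expectation
given the first `k` tosses. -/
noncomputable def martingaleTransform :
    (K : ℕ) → (ℕ → ℝ) → (DyadicSpace K → E) → DyadicSpace K → E
  | 0, _, _ => fun _ => 0
  | K + 1, v, x => fun ω =>
      v 0 • (dyadicMean K (fun ω' => x (ω.1, ω')) - dyadicMean (K + 1) x)
        + martingaleTransform K (fun i => v (i + 1)) (fun ω' => x (ω.1, ω')) ω.2

lemma dyadicMean_succ (K : ℕ) (x : DyadicSpace (K + 1) → E) : dyadicMean (K + 1) x =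
    (1 / 2 : ℝ) • (dyadicMean K (fun ω => x (false, ω)) + dyadicMean K (fun ω => x (true, ω))) :=
  rfl

lemma martingaleTransform_succ (K : ℕ) (v : ℕ → ℝ) (x : DyadicSpace (K + 1) → E) (b : Bool)
    (ω : DyadicSpace K) : martingaleTransform (K + 1) v x (b, ω) =
      v 0 • (dyadicMean K (fun ω' => x (b, ω')) - dyadicMean (K + 1) x)
        + martingaleTransform K (fun i => v (i + 1)) (fun ω' => x (b, ω')) ω :=
  rfl

lemma dyadicMean_map (L : E →ₗ[ℝ] F) (K : ℕ) (x : DyadicSpace K → E) :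
    dyadicMean K (fun ω => L (x ω)) = L (dyadicMean K x) := by
  induction K with
  | zero => rfl
  | succ K ih => simp only [dyadicMean_succ, ih, map_smul, map_add]

lemma dyadicMean_add (K : ℕ) (x y : DyadicSpace K → E) :
    dyadicMean K (fun ω => x ω + y ω) = dyadicMean K x + dyadicMean K y := by
  induction K with
  | zero => rfl
  | succ K ih => simp only [dyadicMean_succ, ih, ← smul_add, add_add_add_comm]

lemma dyadicMean_smul (c : ℝ) (K : ℕ) (x : DyadicSpace K → E) :
    dyadicMean K (fun ω => c • x ω) = c • dyadicMean K x :=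
  dyadicMean_map (LinearMap.lsmul ℝ E c) K x

lemma dyadicMean_const (K : ℕ) (c : E) : dyadicMean K (fun _ => c) = c := by
  induction K with
  | zero => rfl
  | succ K ih => rw [dyadicMean_succ, ih, ← two_smul ℝ c, smul_smul, one_div,
      inv_mul_cancel₀ two_ne_zero, one_smul]

lemma martingaleTransform_map (L : E →ₗ[ℝ] F) (K : ℕ) (v : ℕ → ℝ) (x : DyadicSpace K → E)
    (ω : DyadicSpace K) :
    martingaleTransform K v (fun ω => L (x ω)) ω = L (martingaleTransform K v x ω) := by
  induction K generalizing v with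
  | zero => exact (map_zero L).symm
  | succ K ih =>
    obtain ⟨b, ω⟩ := ω
    simp only [martingaleTransform_succ, ih, dyadicMean_map, map_add, map_smul, map_sub]

lemma martingaleTransform_add (K : ℕ) (v : ℕ → ℝ) (x y : DyadicSpace K → E) (ω : DyadicSpace K) :
    martingaleTransform K v (fun ω => x ω + y ω) ω
      = martingaleTransform K v x ω + martingaleTransform K v y ω := by
  induction K generalizing v with
  | zero => exact (add_zero _).symm
  | succ K ih =>
    obtain ⟨b, ω⟩ := ω
    simp only [martingaleTransform_succ, ih, dyadicMean_add]
    module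

lemma dyadicMean_martingaleTransform (K : ℕ) (v : ℕ → ℝ) (x : DyadicSpace K → E) :
    dyadicMean K (martingaleTransform K v x) = 0 := by
  induction K generalizing v with
  | zero => rfl
  | succ K ih =>
    have hbranch : ∀ b, dyadicMean K (fun ω => martingaleTransform (K + 1) v x (b, ω))
        = v 0 • (dyadicMean K (fun ω => x (b, ω)) - dyadicMean (K + 1) x) := fun b => by
      simp only [martingaleTransform_succ, dyadicMean_add, dyadicMean_const]
      exact add_eq_left.2 (ih _ _)
    rw [dyadicMean_succ, hbranch, hbranch, dyadicMean_succ]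
    module

end Module

lemma dyadicMean_mul (c : ℝ) (K : ℕ) (x : DyadicSpace K → ℝ) :
    dyadicMean K (fun ω => c * x ω) = c * dyadicMean K x :=
  dyadicMean_smul c K x

lemma dyadicMean_nonneg {E : Type*} [AddCommGroup E] [Module ℝ E] [PartialOrder E]
    [IsOrderedAddMonoid E] [PosSMulMono ℝ E] (K : ℕ) {x : DyadicSpace K → E}
    (h : ∀ ω, 0 ≤ x ω) : 0 ≤ dyadicMean K x := by
  induction K with
  | zero => exact h ()
  | succ K ih =>
    exact smul_nonneg (by norm_num)
      (add_nonneg (ih fun ω => h (false, ω)) (ih fun ω => h (true, ω)))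

lemma dyadicMean_mono (K : ℕ) {x y : DyadicSpace K → ℝ} (h : ∀ ω, x ω ≤ y ω) :
    dyadicMean K x ≤ dyadicMean K y := by
  have hdiff := dyadicMean_nonneg K fun ω => sub_nonneg.2 (h ω)
  have hsum := dyadicMean_add K x fun ω => y ω - x ω
  simp only [add_sub_cancel] at hsum
  linarith

section MatrixValued

variable {ι : Type*} [Fintype ι]

lemma dyadicMean_reTrace_mul (A : Matrix ι ι ℂ) (K : ℕ) (x : DyadicSpace K → Matrix ι ι ℂ) :
    dyadicMean K (fun ω => reTrace (A * x ω)) = reTrace (A * dyadicMean K x) :=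
  dyadicMean_map (reTrace ∘ₗ LinearMap.mulLeft ℝ A) K x

lemma dyadicMean_reTrace_mul_right (A : Matrix ι ι ℂ) (K : ℕ) (x : DyadicSpace K → Matrix ι ι ℂ) :
    dyadicMean K (fun ω => reTrace (x ω * A)) = reTrace (dyadicMean K x * A) :=
  dyadicMean_map (reTrace ∘ₗ LinearMap.mulRight ℝ A) K x

lemma dyadicMean_hsNormSq_smul_add_le {t : ℝ} (ht : |t| ≤ 1) (A : Matrix ι ι ℂ) {K : ℕ}
    {x : DyadicSpace K → Matrix ι ι ℂ} (hx : dyadicMean K x = 0) :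
    dyadicMean K (fun ω => hsNormSq (t • A + x ω))
      ≤ hsNormSq A + dyadicMean K (fun ω => hsNormSq (x ω)) := by
  simp only [hsNormSq_add, dyadicMean_add, dyadicMean_const, dyadicMean_mul,
    dyadicMean_reTrace_mul, hx, map_zero, mul_zero, add_zero, hsNormSq_smul]
  have ht' : t ^ 2 ≤ 1 := (sq_le_one_iff_abs_le_one t).2 ht
  gcongr
  exact mul_le_of_le_one_left (hsNormSq_nonneg A) ht'

lemma hsNormSq_parallelogram (A B : Matrix ι ι ℂ) :
    hsNormSq (A - (1 / 2 : ℝ) • (A + B)) + hsNormSq (B - (1 / 2 : ℝ) • (A + B)) =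
      hsNormSq A + hsNormSq B - 2 * hsNormSq ((1 / 2 : ℝ) • (A + B)) := by
  have hA : A - (1 / 2 : ℝ) • (A + B) = (1 / 2 : ℝ) • (A + (-1 : ℝ) • B) := by module
  have hB : B - (1 / 2 : ℝ) • (A + B) = (1 / 2 : ℝ) • ((-1 : ℝ) • A + B) := by module
  rw [hA, hB]
  simp only [hsNormSq_smul, hsNormSq_add, conjTranspose_smul, Matrix.smul_mul, Matrix.mul_smul,
    map_smul, star_trivial, smul_eq_mul]
  ring

lemma reTrace_martingaleTransform_mul (K : ℕ) (v : ℕ → ℝ) (x y : DyadicSpace K → Matrix ι ι ℂ) :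
    dyadicMean K (fun ω => reTrace (martingaleTransform K v x ω * y ω))
      = dyadicMean K (fun ω => reTrace (x ω * martingaleTransform K v y ω)) := by
  induction K generalizing v with
  | zero => simp [dyadicMean, martingaleTransform]
  | succ K ih =>
    simp only [dyadicMean_succ (E := ℝ), martingaleTransform_succ, Matrix.add_mul, Matrix.mul_add,
      map_add, dyadicMean_add, ih, Matrix.smul_mul, Matrix.mul_smul, map_smul, dyadicMean_smul,
      dyadicMean_reTrace_mul, dyadicMean_reTrace_mul_right]
    simp only [dyadicMean_succ, Matrix.sub_mul, Matrix.mul_sub, Matrix.add_mul, Matrix.mul_add,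
      Matrix.smul_mul, Matrix.mul_smul, map_add, map_sub, map_smul, smul_eq_mul]
    ring

lemma dyadicMean_hsNormSq_martingaleTransform_le (K : ℕ) {v : ℕ → ℝ} (hv : ∀ i, |v i| ≤ 1)
    (x : DyadicSpace K → Matrix ι ι ℂ) :
    dyadicMean K (fun ω => hsNormSq (martingaleTransform K v x ω))
      ≤ dyadicMean K (fun ω => hsNormSq (x ω)) - hsNormSq (dyadicMean K x) := by
  induction K generalizing v with
  | zero => simp [dyadicMean, martingaleTransform, hsNormSq]
  | succ K ih =>
    have hbranch := fun b => (dyadicMean_hsNormSq_smul_add_le (hv 0)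
      (dyadicMean K (fun ω => x (b, ω)) - dyadicMean (K + 1) x)
      (dyadicMean_martingaleTransform K (fun i => v (i + 1)) fun ω => x (b, ω))).trans
      (add_le_add_right (ih (fun i => hv (i + 1)) fun ω => x (b, ω)) _)
    have hfalse := hbranch false
    have htrue := hbranch true
    have hpar := hsNormSq_parallelogram (dyadicMean K fun ω => x (false, ω))
      (dyadicMean K fun ω => x (true, ω))
    rw [← dyadicMean_succ] at hpar
    simp only [dyadicMean_succ (E := ℝ), martingaleTransform_succ, smul_eq_mul]
    linarith

end MatrixValued

section Cuculescu

variable {ι : Type*} [Fintype ι] {K : ℕ} {q : Matrix ι ι ℂ} {s : ℝ}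

/-- A Cuculescu decomposition, inside the projection `q` and at height `s`, for the transform of the
martingale closed by `x`: projections `Q ω ≤ q` below which `x` is at most `s`, and a square
integrable substitute `W` for the transform, which has the same compression to `Q`. -/
structure IsCuculescuDecomposition (v : ℕ → ℝ) (x : DyadicSpace K → Matrix ι ι ℂ)
    (q : Matrix ι ι ℂ) (s : ℝ) (Q W : DyadicSpace K → Matrix ι ι ℂ) : Prop where
  isStarProjection : ∀ ω, IsStarProjection (Q ω)
  mul_right : ∀ ω, Q ω * q = Q ω
  mul_left : ∀ ω, q * Q ω = Q ω
  compression_le : ∀ ω, Q ω * x ω * Q ω ≤ s • Q ω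
  mean_eq_zero : dyadicMean K W = 0
  compression_eq : ∀ ω, Q ω * W ω * Q ω = Q ω * martingaleTransform K v x ω * Q ω
  hsNormSq_le : dyadicMean K (fun ω => hsNormSq (W ω))
    ≤ dyadicMean K (fun ω => hsNormSq (Q ω * x ω * Q ω)) - hsNormSq (q * dyadicMean K x * q)
      + 2 * s * dyadicMean K (fun ω => reTrace ((q - Q ω) * x ω))
  reTrace_le : s * dyadicMean K (fun ω => reTrace (q - Q ω))
    ≤ dyadicMean K (fun ω => reTrace ((q - Q ω) * x ω))

lemma dyadicMean_reTrace_sub (q r : Matrix ι ι ℂ) (Q : DyadicSpace K → Matrix ι ι ℂ) :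
    dyadicMean K (fun ω => reTrace (q - Q ω))
      = reTrace (q - r) + dyadicMean K (fun ω => reTrace (r - Q ω)) := by
  rw [← dyadicMean_const K (reTrace (q - r)), ← dyadicMean_add]
  simp only [← map_add, sub_add_sub_cancel]

lemma dyadicMean_reTrace_sub_mul (q r : Matrix ι ι ℂ) (Q x : DyadicSpace K → Matrix ι ι ℂ) :
    dyadicMean K (fun ω => reTrace ((q - Q ω) * x ω)) = reTrace ((q - r) * dyadicMean K x)
      + dyadicMean K (fun ω => reTrace ((r - Q ω) * x ω)) := by
  rw [← dyadicMean_reTrace_mul, ← dyadicMean_add]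
  simp only [← map_add, ← Matrix.add_mul, sub_add_sub_cancel]

lemma compression_dyadicMean_branch_le (hq : IsStarProjection q)
    {x : DyadicSpace (K + 1) → Matrix ι ι ℂ} (hx : ∀ ω, 0 ≤ x ω)
    (h : q * dyadicMean (K + 1) x * q ≤ s • q) (b : Bool) :
    q * dyadicMean K (fun ω => x (b, ω)) * q ≤ (2 * s) • q := by
  have hother : 0 ≤ q * dyadicMean K (fun ω => x (!b, ω)) * q :=
    hq.isSelfAdjoint.conjugate_nonneg (dyadicMean_nonneg K fun ω => hx _)
  have htwo : q * dyadicMean K (fun ω => x (b, ω)) * q + q * dyadicMean K (fun ω => x (!b, ω)) * q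
      = (2 : ℝ) • (q * dyadicMean (K + 1) x * q) := by
    rw [dyadicMean_succ]
    cases b <;> simp only [Bool.not_true, Bool.not_false, Matrix.mul_smul, Matrix.smul_mul,
      Matrix.mul_add, Matrix.add_mul] <;> module
  calc _ ≤ _ := le_add_of_nonneg_right hother
    _ ≤ (2 : ℝ) • s • q := htwo.trans_le (smul_le_smul_of_nonneg_left h zero_le_two)
    _ = (2 * s) • q := smul_smul _ _ _

lemma hsNormSq_compression_increment_add (q : Matrix ι ι ℂ)
    (x : DyadicSpace (K + 1) → Matrix ι ι ℂ) :
    hsNormSq (q * (dyadicMean K (fun ω => x (false, ω)) - dyadicMean (K + 1) x) * q)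
        + hsNormSq (q * (dyadicMean K (fun ω => x (true, ω)) - dyadicMean (K + 1) x) * q)
      = hsNormSq (q * dyadicMean K (fun ω => x (false, ω)) * q)
        + hsNormSq (q * dyadicMean K (fun ω => x (true, ω)) * q)
        - 2 * hsNormSq (q * dyadicMean (K + 1) x * q) := by
  have hpar := hsNormSq_parallelogram (q * dyadicMean K (fun ω => x (false, ω)) * q)
    (q * dyadicMean K (fun ω => x (true, ω)) * q)
  rwa [← Matrix.add_mul, ← Matrix.mul_add, ← Matrix.smul_mul, ← Matrix.mul_smul, ← dyadicMean_succ,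
    ← Matrix.sub_mul, ← Matrix.mul_sub, ← Matrix.sub_mul, ← Matrix.mul_sub] at hpar

lemma isCuculescuDecomposition_zero (hq : IsStarProjection q) {x : DyadicSpace 0 → Matrix ι ι ℂ}
    (h : q * dyadicMean 0 x * q ≤ s • q) (v : ℕ → ℝ) :
    IsCuculescuDecomposition v x q s (fun _ => q) (fun _ => 0) where
  isStarProjection _ := hq
  mul_right _ := hq.isIdempotentElem
  mul_left _ := hq.isIdempotentElem
  compression_le _ := h
  mean_eq_zero := rfl
  compression_eq _ := rfl
  hsNormSq_le := by simp [dyadicMean, hsNormSq]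
  reTrace_le := by simp [dyadicMean]

lemma hsNormSq_le_of_le_smul {X Q : Matrix ι ι ℂ} (hX : 0 ≤ X) (hQ : IsStarProjection Q)
    (h : Q * X * Q ≤ s • Q) : hsNormSq (Q * X * Q) ≤ s * reTrace (Q * X) := by
  have hnonneg : 0 ≤ Q * X * Q := hQ.isSelfAdjoint.conjugate_nonneg hX
  have hbound := reTrace_mul_nonneg hnonneg (sub_nonneg.2 h)
  have hself : (Q * X * Q)ᴴ = Q * X * Q := IsSelfAdjoint.of_nonneg hnonneg
  have htrace : reTrace (Q * X * Q) = reTrace (Q * X) := by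
    rw [reTrace_mul_comm, ← Matrix.mul_assoc, hQ.isIdempotentElem.eq]
  rw [Matrix.mul_sub, map_sub, Matrix.mul_smul, map_smul, Matrix.mul_assoc _ Q Q,
    hQ.isIdempotentElem.eq, htrace, smul_eq_mul] at hbound
  rw [hsNormSq, hself]
  linarith

lemma dyadicMean_hsNormSq_branch_le [DecidableEq ι] {v : ℕ → ℝ} (hv : ∀ i, |v i| ≤ 1)
    {x : DyadicSpace (K + 1) → Matrix ι ι ℂ} (hq : IsStarProjection q) (hx : ∀ ω, 0 ≤ x ω)
    (hs : 0 ≤ s) (hqx : q * dyadicMean (K + 1) x * q ≤ s • q) (b : Bool)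
    {Q W : DyadicSpace K → Matrix ι ι ℂ}
    (h : IsCuculescuDecomposition (fun i => v (i + 1)) (fun ω => x (b, ω))
      (cutoffProjection q (dyadicMean K fun ω => x (b, ω)) s) s Q W) (D : Matrix ι ι ℂ) :
    dyadicMean K (fun ω => hsNormSq (v 0 • D + W ω))
      ≤ hsNormSq D + (dyadicMean K (fun ω => hsNormSq (Q ω * x (b, ω) * Q ω))
        - hsNormSq (q * dyadicMean K (fun ω => x (b, ω)) * q)
        + 2 * s * dyadicMean K (fun ω => reTrace ((q - Q ω) * x (b, ω)))) := by
  have hm : IsSelfAdjoint (dyadicMean K fun ω => x (b, ω)) :=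
    .of_nonneg (dyadicMean_nonneg K fun ω => hx _)
  have hcut := hsNormSq_compression_le_add hq hm hs (compression_dyadicMean_branch_le hq hx hqx b)
  have hincr := dyadicMean_hsNormSq_smul_add_le (hv 0) D h.mean_eq_zero
  have hW := h.hsNormSq_le
  rw [dyadicMean_reTrace_sub_mul q (cutoffProjection q (dyadicMean K fun ω => x (b, ω)) s)]
  linarith

lemma smul_dyadicMean_reTrace_sub_le [DecidableEq ι] {v : ℕ → ℝ}
    {x Q W : DyadicSpace K → Matrix ι ι ℂ}
    (hq : IsStarProjection q) (hm : IsSelfAdjoint (dyadicMean K x)) (hs : 0 ≤ s)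
    (h : IsCuculescuDecomposition v x (cutoffProjection q (dyadicMean K x) s) s Q W) :
    s * dyadicMean K (fun ω => reTrace (q - Q ω))
      ≤ dyadicMean K (fun ω => reTrace ((q - Q ω) * x ω)) := by
  rw [dyadicMean_reTrace_sub q (cutoffProjection q (dyadicMean K x) s),
    dyadicMean_reTrace_sub_mul q (cutoffProjection q (dyadicMean K x) s), mul_add]
  exact add_le_add (smul_reTrace_sub_cutoffProjection_le hq hm hs) h.reTrace_le

lemma IsCuculescuDecomposition.cons [DecidableEq ι] {v : ℕ → ℝ} (hv : ∀ i, |v i| ≤ 1)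
    {x : DyadicSpace (K + 1) → Matrix ι ι ℂ} (hq : IsStarProjection q) (hx : ∀ ω, 0 ≤ x ω)
    (hs : 0 ≤ s) (hqx : q * dyadicMean (K + 1) x * q ≤ s • q)
    {Q W : Bool → DyadicSpace K → Matrix ι ι ℂ}
    (h : ∀ b, IsCuculescuDecomposition (fun i => v (i + 1)) (fun ω => x (b, ω))
      (cutoffProjection q (dyadicMean K fun ω => x (b, ω)) s) s (Q b) (W b)) :
    IsCuculescuDecomposition v x q s (fun ω => Q ω.1 ω.2) (fun ω =>
      v 0 • (q * (dyadicMean K (fun ω' => x (ω.1, ω')) - dyadicMean (K + 1) x) * q)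
        + W ω.1 ω.2) := by
  have hm : ∀ b, IsSelfAdjoint (dyadicMean K fun ω => x (b, ω)) := fun b =>
    .of_nonneg (dyadicMean_nonneg K fun ω => hx _)
  have hright : ∀ b ω, Q b ω * q = Q b ω := fun b ω => by
    rw [← (h b).mul_right ω, Matrix.mul_assoc, cutoffProjection_mul hq (hm b) hs]
  have hleft : ∀ b ω, q * Q b ω = Q b ω := fun b ω => by
    rw [← (h b).mul_left ω, ← Matrix.mul_assoc, mul_cutoffProjection hq (hm b) hs]
  refine ⟨fun ω => (h _).isStarProjection _, fun ω => hright _ _, fun ω => hleft _ _,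
    fun ω => (h _).compression_le _, ?_, ?_, ?_, ?_⟩
  · simp only [dyadicMean_succ, dyadicMean_add, dyadicMean_const, (h _).mean_eq_zero,
      Matrix.mul_smul, Matrix.smul_mul, Matrix.mul_add, Matrix.add_mul, Matrix.mul_sub,
      Matrix.sub_mul]
    module
  · rintro ⟨b, ω⟩
    have hincr : Q b ω * (q * (dyadicMean K (fun ω' => x (b, ω')) - dyadicMean (K + 1) x) * q)
        * Q b ω
        = Q b ω * (dyadicMean K (fun ω' => x (b, ω')) - dyadicMean (K + 1) x) * Q b ω := by
      rw [Matrix.mul_assoc q, ← Matrix.mul_assoc, hright, Matrix.mul_assoc, Matrix.mul_assoc _ q,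
        hleft, ← Matrix.mul_assoc]
    rw [martingaleTransform_succ, Matrix.mul_add, Matrix.add_mul, (h b).compression_eq,
      Matrix.mul_add, Matrix.add_mul, Matrix.mul_smul, Matrix.smul_mul, hincr, Matrix.mul_smul,
      Matrix.smul_mul]
  · have hbranch := fun b => dyadicMean_hsNormSq_branch_le hv hq hx hs hqx b (h b)
      (q * (dyadicMean K (fun ω => x (b, ω)) - dyadicMean (K + 1) x) * q)
    have hfalse := hbranch false
    have htrue := hbranch true
    have hpar := hsNormSq_compression_increment_add q x
    simp only [dyadicMean_succ (E := ℝ), smul_eq_mul]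
    linarith
  · have hbranch := fun b => smul_dyadicMean_reTrace_sub_le hq (hm b) hs (h b)
    have hfalse := hbranch false
    have htrue := hbranch true
    simp only [dyadicMean_succ (E := ℝ), smul_eq_mul]
    linarith

lemma exists_isCuculescuDecomposition {v : ℕ → ℝ} (hv : ∀ i, |v i| ≤ 1)
    {x : DyadicSpace K → Matrix ι ι ℂ} (hx : ∀ ω, 0 ≤ x ω) (hq : IsStarProjection q)
    (hs : 0 ≤ s) (hqx : q * dyadicMean K x * q ≤ s • q) :
    ∃ Q W : DyadicSpace K → Matrix ι ι ℂ, IsCuculescuDecomposition v x q s Q W := by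
  classical
  induction K generalizing v q with
  | zero => exact ⟨_, _, isCuculescuDecomposition_zero hq hqx v⟩
  | succ K ih =>
    have hm : ∀ b, IsSelfAdjoint (dyadicMean K fun ω => x (b, ω)) := fun b =>
      .of_nonneg (dyadicMean_nonneg K fun ω => hx _)
    choose Q W h using fun b => ih (fun i => hv (i + 1)) (fun ω => hx (b, ω))
      (isStarProjection_cutoffProjection hq (hm b) hs)
      (cutoffProjection_compression_le hq (hm b) hs)
    exact ⟨_, _, .cons hv hq hx hs hqx h⟩

end Cuculescu

lemma svCount_le_hsNormSq_add {Q T W : Matrix (Fin d) (Fin d) ℂ} {s : ℝ} (hs : 0 < s)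
    (hQ : IsStarProjection Q) (h : Q * W * Q = Q * T * Q) :
    (svCount T s : ℝ) ≤ 1 / s ^ 2 * hsNormSq W + 2 * reTrace (1 - Q) := by
  have hcompression := svCount_le_svCount_compression_add hQ.isIdempotentElem T hs.le
  rw [← h] at hcompression
  have hchebyshev := svCount_mul_sq_le_hsNormSq (Q * W * Q) hs.le
  have hcount : (svCount (Q * W * Q) s : ℝ) ≤ 1 / s ^ 2 * hsNormSq W := by
    rw [one_div, inv_mul_eq_div, le_div_iff₀ (by positivity)]
    linarith [hsNormSq_compression_le hQ W]
  linarith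

lemma IsCuculescuDecomposition.dyadicMean_hsNormSq_le {K : ℕ} {v : ℕ → ℝ}
    {x Q W : DyadicSpace K → Matrix (Fin d) (Fin d) ℂ} (hx : ∀ ω, 0 ≤ x ω) {s : ℝ}
    {r : Matrix (Fin d) (Fin d) ℂ} (h : IsCuculescuDecomposition v x r s Q W) :
    dyadicMean K (fun ω => hsNormSq (W ω))
      ≤ s * (dyadicMean K (fun ω => reTrace (Q ω * x ω))
        + 2 * dyadicMean K (fun ω => reTrace ((r - Q ω) * x ω))) := by
  have hcut := dyadicMean_mono K fun ω =>
    hsNormSq_le_of_le_smul (hx ω) (h.isStarProjection ω) (h.compression_le ω)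
  rw [dyadicMean_mul] at hcut
  linarith [h.hsNormSq_le, hsNormSq_nonneg (r * dyadicMean K x * r)]

theorem svCount_martingaleTransform_weak_type (K : ℕ) {v : ℕ → ℝ} (hv : ∀ i, |v i| ≤ 1)
    {x : DyadicSpace K → Matrix (Fin d) (Fin d) ℂ} (hx : ∀ ω, 0 ≤ x ω) {s : ℝ} (hs : 0 < s) :
    dyadicMean K (fun ω => (svCount (martingaleTransform K v x ω) s : ℝ))
      ≤ 4 / s * dyadicMean K (fun ω => reTrace (x ω)) := by
  have hm : IsSelfAdjoint (dyadicMean K x) := .of_nonneg (dyadicMean_nonneg K hx)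
  have hone : IsStarProjection (1 : Matrix (Fin d) (Fin d) ℂ) := .one _
  set r := cutoffProjection 1 (dyadicMean K x) s
  have hr : IsStarProjection r := isStarProjection_cutoffProjection hone hm hs.le
  obtain ⟨Q, W, h⟩ := exists_isCuculescuDecomposition hv hx hr hs.le
    (cutoffProjection_compression_le hone hm hs.le)
  have hcount := dyadicMean_mono K fun ω =>
    svCount_le_hsNormSq_add hs (h.isStarProjection ω) (h.compression_eq ω)
  rw [dyadicMean_add, dyadicMean_mul, dyadicMean_mul] at hcount
  have hnorm := h.dyadicMean_hsNormSq_le hx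
  have hsplit := dyadicMean_reTrace_sub_mul 1 r Q x
  have hcompl : s * dyadicMean K (fun ω => reTrace (1 - Q ω))
      ≤ dyadicMean K (fun ω => reTrace ((1 - Q ω) * x ω)) := by
    rw [dyadicMean_reTrace_sub 1 r, hsplit, mul_add]
    exact add_le_add (smul_reTrace_sub_cutoffProjection_le hone hm hs.le) h.reTrace_le
  have htotal : dyadicMean K (fun ω => reTrace (x ω)) = dyadicMean K (fun ω => reTrace (Q ω * x ω))
      + dyadicMean K (fun ω => reTrace ((1 - Q ω) * x ω)) := by
    simp only [← dyadicMean_add, ← map_add, ← Matrix.add_mul, add_sub_cancel, Matrix.one_mul]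
  have houter : 0 ≤ reTrace ((1 - r) * dyadicMean K x) :=
    reTrace_mul_nonneg hr.one_sub_nonneg (dyadicMean_nonneg K hx)
  have hinner : 0 ≤ dyadicMean K (fun ω => reTrace (Q ω * x ω)) :=
    dyadicMean_nonneg K fun ω => reTrace_mul_nonneg (h.isStarProjection ω).nonneg (hx ω)
  rw [htotal, div_mul_eq_mul_div, le_div_iff₀ hs]
  calc _ ≤ _ := mul_le_mul_of_nonneg_right hcount hs.le
    _ = dyadicMean K (fun ω => hsNormSq (W ω)) / s
        + 2 * (s * dyadicMean K (fun ω => reTrace (1 - Q ω))) := by field_simp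
    _ ≤ _ := by
      have := (div_le_iff₀' hs).2 hnorm
      linarith

/-! ### Schatten norms and duality -/

section Schatten

variable {U V : Matrix (Fin d) (Fin d) ℂ} {p q : ℝ}

/-- The `p`-th power `∑ᵢ σᵢ(A)^p` of the Schatten norm. -/
noncomputable def schattenSum (p : ℝ) (A : Matrix (Fin d) (Fin d) ℂ) : ℝ :=
  ∑ i, singularValues A i ^ p

lemma schattenSum_nonneg (p : ℝ) (A : Matrix (Fin d) (Fin d) ℂ) : 0 ≤ schattenSum p A :=
  sum_nonneg fun i _ => Real.rpow_nonneg (singularValues_nonneg A i) p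

lemma schattenSum_two (A : Matrix (Fin d) (Fin d) ℂ) : schattenSum 2 A = hsNormSq A := by
  simp only [schattenSum, Real.rpow_two, hsNormSq_eq_sum_singularValues]

lemma schattenSum_unitary_mul_mul (hU : U ∈ unitaryGroup (Fin d) ℂ)
    (hV : V ∈ unitaryGroup (Fin d) ℂ) (A : Matrix (Fin d) (Fin d) ℂ) (p : ℝ) :
    schattenSum p (U * A * V) = schattenSum p A := by
  obtain ⟨U', hU', V', hV', h⟩ := exists_singularValueDecomposition A
  have hUAV : U * A * V = U * U' * realDiagonal (singularValues A) * (V' * V) := by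
    conv_lhs => rw [h]
    simp only [Matrix.mul_assoc]
  simpa only [schattenSum, abs_of_nonneg (singularValues_nonneg A _)] using
    sum_singularValues_eq (mul_mem hU hU') (mul_mem hV' hV) hUAV (· ^ p)

lemma schattenSum_conjTranspose (A : Matrix (Fin d) (Fin d) ℂ) (p : ℝ) :
    schattenSum p Aᴴ = schattenSum p A := by
  obtain ⟨U, hU, V, hV, h⟩ := exists_singularValueDecomposition A
  have hA : Aᴴ = Vᴴ * realDiagonal (singularValues A) * Uᴴ := by
    conv_lhs => rw [h]
    simp only [conjTranspose_mul, conjTranspose_realDiagonal, Matrix.mul_assoc]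
  simpa only [schattenSum, abs_of_nonneg (singularValues_nonneg A _)] using
    sum_singularValues_eq (conjTranspose_mem_unitaryGroup hV) (conjTranspose_mem_unitaryGroup hU)
      hA (· ^ p)

lemma schattenSum_smul (c : ℂ) (A : Matrix (Fin d) (Fin d) ℂ) (p : ℝ) :
    schattenSum p (c • A) = ‖c‖ ^ p * schattenSum p A := by
  obtain ⟨U, hU, V, hV, h⟩ := exists_singularValueDecomposition A
  set u : ℂ := Complex.exp (c.arg * Complex.I)
  have hu : u ∈ unitary ℂ := by
    rw [Unitary.mem_iff_star_mul_self, Complex.star_def, Complex.conj_mul',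
      Complex.norm_exp_ofReal_mul_I, Complex.ofReal_one, one_pow]
  have hA : c • A = u • U * realDiagonal (fun i => ‖c‖ * singularValues A i) * V := by
    have hdiag : realDiagonal (fun i => ‖c‖ * singularValues A i)
        = (‖c‖ : ℂ) • realDiagonal (singularValues A) := by
      ext i k
      simp [realDiagonal, diagonal_apply]
    conv_lhs => rw [h, ← Complex.norm_mul_exp_arg_mul_I c]
    rw [hdiag, mul_comm, Matrix.smul_mul, Matrix.mul_smul, smul_smul, Matrix.smul_mul]
  rw [schattenSum, sum_singularValues_eq (Unitary.smul_mem_of_mem hu hU) hV hA (· ^ p), schattenSum,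
    mul_sum]
  refine sum_congr rfl fun i _ => ?_
  rw [abs_of_nonneg (mul_nonneg (norm_nonneg c) (singularValues_nonneg A i)),
    Real.mul_rpow (norm_nonneg c) (singularValues_nonneg A i)]

lemma schattenSum_smul_of_norm_eq_one {c : ℂ} (hc : ‖c‖ = 1) (A : Matrix (Fin d) (Fin d) ℂ)
    (p : ℝ) : schattenSum p (c • A) = schattenSum p A := by
  rw [schattenSum_smul, hc, Real.one_rpow, one_mul]

lemma schattenSum_real_smul {c : ℝ} (hc : 0 ≤ c) (A : Matrix (Fin d) (Fin d) ℂ) (p : ℝ) :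
    schattenSum p (c • A) = c ^ p * schattenSum p A := by
  have := schattenSum_smul c A p
  rwa [Complex.coe_smul, Complex.norm_real, Real.norm_of_nonneg hc] at this

lemma sum_singularValues_of_nonneg (hA : 0 ≤ A) (F : ℝ → ℝ) :
    ∑ i, F (singularValues A i)
      = ∑ i, F ((nonneg_iff_posSemidef.1 hA).isHermitian.eigenvalues i) := by
  obtain ⟨U, hU, h⟩ := exists_unitary_diagonalization (nonneg_iff_posSemidef.1 hA).isHermitian
  simp only [sum_singularValues_eq hU (conjTranspose_mem_unitaryGroup hU) h F,
    abs_of_nonneg ((nonneg_iff_posSemidef.1 hA).eigenvalues_nonneg _)]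

lemma sum_singularValues_cfc (hA : A.IsHermitian) (f F : ℝ → ℝ) :
    ∑ i, F (singularValues (cfc f A) i) = ∑ i, F |f (hA.eigenvalues i)| :=
  sum_singularValues_eq hA.eigenvectorUnitary.2
    (conjTranspose_mem_unitaryGroup hA.eigenvectorUnitary.2) (hA.cfc_eq f) F

lemma schattenSum_cfc_le (hA : A.IsHermitian) {f : ℝ → ℝ} (hf : ∀ x, |f x| ≤ |x|) (hp : 0 ≤ p) :
    schattenSum p (cfc f A) ≤ schattenSum p A := by
  have hid := sum_singularValues_cfc hA id (· ^ p)
  rw [cfc_id ℝ A hA.isSelfAdjoint] at hid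
  rw [schattenSum, schattenSum, hid, sum_singularValues_cfc hA f (· ^ p)]
  exact sum_le_sum fun i _ => Real.rpow_le_rpow (abs_nonneg _) (hf _) hp

lemma reTrace_eq_schattenSum_one (hA : 0 ≤ A) : reTrace A = schattenSum 1 A := by
  have hherm := (nonneg_iff_posSemidef.1 hA).isHermitian
  rw [schattenSum, sum_singularValues_of_nonneg hA (· ^ (1 : ℝ))]
  simp [reTrace, hherm.trace_eq_sum_eigenvalues]

lemma sum_sq_norm_row_of_unitary {ι : Type*} [Fintype ι] [DecidableEq ι] {U : Matrix ι ι ℂ}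
    (hU : U ∈ unitaryGroup ι ℂ) (i : ι) : ∑ k, ‖U i k‖ ^ 2 = 1 := by
  have hdiag := congrFun (congrFun (mem_unitaryGroup_iff.1 hU) i) i
  simp only [Matrix.mul_apply, star_apply, Complex.star_def, Complex.mul_conj', one_apply_eq]
    at hdiag
  exact_mod_cast hdiag

lemma sum_sq_norm_col_of_unitary {ι : Type*} [Fintype ι] [DecidableEq ι] {U : Matrix ι ι ℂ}
    (hU : U ∈ unitaryGroup ι ℂ) (k : ι) : ∑ i, ‖U i k‖ ^ 2 = 1 := by
  simpa using sum_sq_norm_row_of_unitary (conjTranspose_mem_unitaryGroup hU) k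

-- Young's inequality termwise; the weights `(‖U i k‖² + ‖V k i‖²) / 2` are doubly stochastic.
lemma sum_mul_mul_re_le_of_unitary {ι : Type*} [Fintype ι] [DecidableEq ι] {U V : Matrix ι ι ℂ}
    (hU : U ∈ unitaryGroup ι ℂ) (hV : V ∈ unitaryGroup ι ℂ) {s t : ι → ℝ} (hs : ∀ i, 0 ≤ s i)
    (ht : ∀ i, 0 ≤ t i) (hpq : p.HolderConjugate q) :
    ∑ i, ∑ k, s i * t k * (U i k * V k i).re ≤ (∑ i, s i ^ p) / p + (∑ k, t k ^ q) / q := by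
  set w : ι → ι → ℝ := fun i k => (‖U i k‖ ^ 2 + ‖V k i‖ ^ 2) / 2
  have hrow : ∀ i, ∑ k, w i k = 1 := fun i => by
    rw [← sum_div, sum_add_distrib, sum_sq_norm_row_of_unitary hU, sum_sq_norm_col_of_unitary hV]
    norm_num
  have hcol : ∀ k, ∑ i, w i k = 1 := fun k => by
    rw [← sum_div, sum_add_distrib, sum_sq_norm_col_of_unitary hU, sum_sq_norm_row_of_unitary hV]
    norm_num
  have hterm : ∀ i k,
      s i * t k * (U i k * V k i).re ≤ s i ^ p / p * w i k + t k ^ q / q * w i k := by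
    intro i k
    have hre : (U i k * V k i).re ≤ w i k := by
      have := Complex.re_le_norm (U i k * V k i)
      rw [norm_mul] at this
      simp only [w]
      linarith [two_mul_le_add_sq ‖U i k‖ ‖V k i‖]
    calc _ ≤ s i * t k * w i k := mul_le_mul_of_nonneg_left hre (mul_nonneg (hs i) (ht k))
      _ ≤ (s i ^ p / p + t k ^ q / q) * w i k := mul_le_mul_of_nonneg_right
          (Real.young_inequality_of_nonneg (hs i) (ht k) hpq) (by positivity)
      _ = _ := add_mul _ _ _
  calc _ ≤ ∑ i, ∑ k, (s i ^ p / p * w i k + t k ^ q / q * w i k) :=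
        sum_le_sum fun i _ => sum_le_sum fun k _ => hterm i k
    _ = ∑ i, s i ^ p / p * ∑ k, w i k + ∑ k, t k ^ q / q * ∑ i, w i k := by
        simp only [sum_add_distrib, mul_sum]
        rw [sum_comm (f := fun i k => t k ^ q / q * w i k)]
    _ = _ := by simp only [hrow, hcol, mul_one, sum_div]

lemma reTrace_realDiagonal_mul_mul_mul {ι : Type*} [Fintype ι] [DecidableEq ι] (s t : ι → ℝ)
    (U V : Matrix ι ι ℂ) : reTrace (realDiagonal s * U * (realDiagonal t * V))
      = ∑ i, ∑ k, s i * t k * (U i k * V k i).re := by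
  simp only [reTrace, LinearMap.comp_apply, traceLinearMap_apply, trace, diag_apply,
    Matrix.mul_apply (M := realDiagonal s * U), Complex.reLm_coe, Complex.re_sum]
  refine sum_congr rfl fun i _ => sum_congr rfl fun k _ => ?_
  rw [realDiagonal, realDiagonal, diagonal_mul, diagonal_mul, mul_mul_mul_comm,
    ← Complex.ofReal_mul, Complex.re_ofReal_mul]

lemma reTrace_mul_le (A B : Matrix (Fin d) (Fin d) ℂ) (hpq : p.HolderConjugate q) :
    reTrace (A * B) ≤ schattenSum p A / p + schattenSum q B / q := by
  obtain ⟨U, hU, V, hV, hA⟩ := exists_singularValueDecomposition A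
  obtain ⟨U', hU', V', hV', hB⟩ := exists_singularValueDecomposition B
  have hAB : reTrace (A * B) = reTrace (realDiagonal (singularValues A) * (V * U')
      * (realDiagonal (singularValues B) * (V' * U))) := by
    conv_lhs => rw [hA, hB, Matrix.mul_assoc, Matrix.mul_assoc, reTrace_mul_comm]
    simp only [Matrix.mul_assoc]
  rw [hAB, reTrace_realDiagonal_mul_mul_mul]
  exact sum_mul_mul_re_le_of_unitary (mul_mem hV hU') (mul_mem hV' hU) (singularValues_nonneg A)
    (singularValues_nonneg B) hpq

lemma exists_reTrace_mul_eq_schattenSum (A : Matrix (Fin d) (Fin d) ℂ) (hpq : p.HolderConjugate q) :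
    ∃ B : Matrix (Fin d) (Fin d) ℂ,
      reTrace (A * B) = schattenSum p A ∧ schattenSum q B = schattenSum p A := by
  obtain ⟨U, hU, V, hV, h⟩ := exists_singularValueDecomposition A
  set e : Fin d → ℝ := fun i => singularValues A i ^ (p - 1)
  refine ⟨Vᴴ * realDiagonal e * Uᴴ, ?_, ?_⟩
  · have htrace : reTrace (A * (Vᴴ * realDiagonal e * Uᴴ))
        = reTrace (realDiagonal fun i => singularValues A i * e i) := by
      set s := realDiagonal (singularValues A) with hs
      calc _ = reTrace (U * (s * (V * Vᴴ) * realDiagonal e * Uᴴ)) := by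
            conv_lhs => rw [h]
            simp only [Matrix.mul_assoc]
        _ = reTrace (s * realDiagonal e * (Uᴴ * U)) := by
            rw [reTrace_mul_comm, ← star_eq_conjTranspose V, mem_unitaryGroup_iff.1 hV,
              Matrix.mul_one]
            simp only [Matrix.mul_assoc]
        _ = _ := by rw [conjTranspose_mul_self_of_unitary hU, Matrix.mul_one, hs, realDiagonal_mul]
    rw [htrace]
    simp only [reTrace, realDiagonal, LinearMap.comp_apply, traceLinearMap_apply, trace_diagonal,
      Complex.reLm_coe, Complex.re_sum, Complex.ofReal_re, schattenSum]
    refine sum_congr rfl fun i _ => ?_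
    rw [← Real.rpow_one_add' (singularValues_nonneg A i) (by simpa using hpq.ne_zero),
      add_sub_cancel]
  · rw [schattenSum, sum_singularValues_eq (conjTranspose_mem_unitaryGroup hV)
      (conjTranspose_mem_unitaryGroup hU) rfl (· ^ q)]
    refine sum_congr rfl fun i _ => ?_
    rw [abs_of_nonneg (Real.rpow_nonneg (singularValues_nonneg A i) _),
      ← Real.rpow_mul (singularValues_nonneg A i), hpq.sub_one_mul_conj]

end Schatten

/-! ### Layer-cake formulas -/

section LayerCake

open MeasureTheory

variable {p : ℝ}

lemma integral_Ioi_rpow_ite_lt {σ : ℝ} (hp : 0 < p) (hσ : 0 ≤ σ) :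
    IntegrableOn (fun s : ℝ => if s < σ then s ^ (p - 1) else 0) (Set.Ioi 0) ∧
      ∫ s in Set.Ioi (0 : ℝ), (if s < σ then s ^ (p - 1) else 0) = σ ^ p / p := by
  have hind : (fun s : ℝ => if s < σ then s ^ (p - 1) else 0)
      = (Set.Iio σ).indicator fun s => s ^ (p - 1) := rfl
  have hIoo : Set.Iio σ ∩ Set.Ioi 0 = Set.Ioo 0 σ := Set.inter_comm _ _
  constructor
  · rw [hind, IntegrableOn, integrable_indicator_iff measurableSet_Iio, IntegrableOn,
      Measure.restrict_restrict measurableSet_Iio, hIoo]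
    exact (intervalIntegrable_iff_integrableOn_Ioo_of_le hσ).1
      (intervalIntegral.intervalIntegrable_rpow' (by linarith))
  · rw [hind, setIntegral_indicator measurableSet_Iio, Set.inter_comm, hIoo,
      ← integral_Ioc_eq_integral_Ioo, ← intervalIntegral.integral_of_le hσ,
      integral_rpow (Or.inl (by linarith))]
    simp [Real.zero_rpow hp.ne']

lemma integral_Ioi_rpow_ite_le {σ : ℝ} (hp : p < 0) (hσ : 0 < σ) :
    IntegrableOn (fun s : ℝ => if σ ≤ s then s ^ (p - 1) else 0) (Set.Ioi 0) ∧
      ∫ s in Set.Ioi (0 : ℝ), (if σ ≤ s then s ^ (p - 1) else 0) = σ ^ p / -p := by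
  have hind : (fun s : ℝ => if σ ≤ s then s ^ (p - 1) else 0)
      = (Set.Ici σ).indicator fun s => s ^ (p - 1) := rfl
  have hIci : Set.Ici σ ∩ Set.Ioi 0 = Set.Ici σ :=
    Set.inter_eq_left.2 fun s hs => hσ.trans_le hs
  constructor
  · rw [hind, IntegrableOn, integrable_indicator_iff measurableSet_Ici, IntegrableOn,
      Measure.restrict_restrict measurableSet_Ici, hIci]
    exact (integrableOn_Ici_iff_integrableOn_Ioi (by simp)).2
      (integrableOn_Ioi_rpow_of_lt (by linarith) hσ)
  · rw [hind, setIntegral_indicator measurableSet_Ici, Set.inter_comm, hIci,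
      integral_Ici_eq_integral_Ioi, integral_Ioi_rpow_of_lt (by linarith) hσ, sub_add_cancel,
      div_neg, neg_div]

lemma integral_dyadicMean {K : ℕ} {f : DyadicSpace K → ℝ → ℝ} {S : Set ℝ}
    (h : ∀ ω, IntegrableOn (f ω) S) :
    IntegrableOn (fun s => dyadicMean K (fun ω => f ω s)) S ∧
      ∫ s in S, dyadicMean K (fun ω => f ω s) = dyadicMean K (fun ω => ∫ s in S, f ω s) := by
  induction K with
  | zero => exact ⟨h (), rfl⟩
  | succ K ih =>
    obtain ⟨hint₀, heq₀⟩ := ih fun ω => h (false, ω)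
    obtain ⟨hint₁, heq₁⟩ := ih fun ω => h (true, ω)
    simp only [dyadicMean_succ, smul_eq_mul]
    exact ⟨(hint₀.add hint₁).const_mul _, by
      rw [integral_const_mul, integral_add hint₀ hint₁, heq₀, heq₁]⟩

lemma integral_sum_singularValues {g : ℝ → ℝ → ℝ} {c : ℝ} {S : Set ℝ}
    (hg : ∀ σ, 0 ≤ σ → IntegrableOn (g σ) S ∧ ∫ s in S, g σ s = c * σ ^ p)
    (A : Matrix (Fin d) (Fin d) ℂ) :
    IntegrableOn (fun s => ∑ i, g (singularValues A i) s) S ∧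
      ∫ s in S, ∑ i, g (singularValues A i) s = c * schattenSum p A := by
  have hA := fun i => hg _ (singularValues_nonneg A i)
  refine ⟨integrable_finsetSum _ fun i _ => (hA i).1, ?_⟩
  rw [integral_finsetSum _ fun i _ => (hA i).1, schattenSum, mul_sum]
  exact sum_congr rfl fun i _ => (hA i).2

lemma integral_dyadicMean_sum_singularValues {g : ℝ → ℝ → ℝ} {c : ℝ} {S : Set ℝ}
    (hg : ∀ σ, 0 ≤ σ → IntegrableOn (g σ) S ∧ ∫ s in S, g σ s = c * σ ^ p) {K : ℕ}
    (x : DyadicSpace K → Matrix (Fin d) (Fin d) ℂ) :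
    IntegrableOn (fun s => dyadicMean K fun ω => ∑ i, g (singularValues (x ω) i) s) S ∧
      ∫ s in S, (dyadicMean K fun ω => ∑ i, g (singularValues (x ω) i) s)
        = c * dyadicMean K fun ω => schattenSum p (x ω) := by
  have hx := fun ω => integral_sum_singularValues hg (x ω)
  have hmean := integral_dyadicMean fun ω => (hx ω).1
  exact ⟨hmean.1, by rw [hmean.2, ← dyadicMean_mul]; simp only [(hx _).2]⟩

lemma integral_rpow_mul_ite_mul_lt {c σ : ℝ} (hp : 0 < p) (hc : 0 < c) (hσ : 0 ≤ σ) :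
    IntegrableOn (fun s : ℝ => s ^ (p - 1) * if c * s < σ then 1 else 0) (Set.Ioi 0) ∧
      ∫ s in Set.Ioi (0 : ℝ), (s ^ (p - 1) * if c * s < σ then 1 else 0)
        = (c ^ p * p)⁻¹ * σ ^ p := by
  have h := integral_Ioi_rpow_ite_lt hp (div_nonneg hσ hc.le)
  simp only [lt_div_iff₀' hc] at h
  simp only [mul_ite, mul_one, mul_zero]
  refine ⟨h.1, h.2.trans ?_⟩
  rw [Real.div_rpow hσ hc.le]
  field_simp

lemma integral_dyadicMean_svCount {c : ℝ} (hp : 0 < p) (hc : 0 < c) {K : ℕ}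
    (x : DyadicSpace K → Matrix (Fin d) (Fin d) ℂ) :
    IntegrableOn (fun s => s ^ (p - 1) * dyadicMean K fun ω => (svCount (x ω) (c * s) : ℝ))
        (Set.Ioi 0) ∧
      ∫ s in Set.Ioi (0 : ℝ), (s ^ (p - 1) * dyadicMean K fun ω => (svCount (x ω) (c * s) : ℝ))
        = (c ^ p * p)⁻¹ * dyadicMean K fun ω => schattenSum p (x ω) := by
  simpa only [← dyadicMean_mul, svCount_eq_sum, mul_sum] using
    integral_dyadicMean_sum_singularValues
      (fun σ hσ => integral_rpow_mul_ite_mul_lt hp hc hσ) x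

lemma schattenSum_add_le (A B : Matrix (Fin d) (Fin d) ℂ) (hp : 0 < p) :
    schattenSum p (A + B) ≤ 2 ^ p * (schattenSum p A + schattenSum p B) := by
  have hcount := fun (M : Matrix (Fin d) (Fin d) ℂ) (c : ℝ) (hc : 0 < c) =>
    integral_dyadicMean_svCount hp hc (K := 0) fun _ => M
  simp only [dyadicMean_const] at hcount
  have hadd := hcount (A + B) 2 two_pos
  have hA := hcount A 1 one_pos
  have hB := hcount B 1 one_pos
  have hmono := setIntegral_mono_on hadd.1 (hA.1.add hB.1) measurableSet_Ioi fun s hs => by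
    have hs : (0 : ℝ) < s := hs
    have := svCount_add_le A B hs.le hs.le
    simp only [Pi.add_apply, ← mul_add, two_mul, one_mul]
    exact mul_le_mul_of_nonneg_left (by exact_mod_cast this) (Real.rpow_nonneg hs.le _)
  simp only [Pi.add_apply] at hmono
  rw [integral_add hA.1 hB.1, hadd.2, hA.2, hB.2, Real.one_rpow, one_mul, ← mul_add,
    inv_mul_le_iff₀ (by positivity)] at hmono
  exact hmono.trans_eq (by field_simp)

lemma integral_mul_rpow_ite_lt {σ : ℝ} (hp : 1 < p) (hσ : 0 ≤ σ) :
    IntegrableOn (fun s : ℝ => σ * if s < σ then s ^ (p - 1 - 1) else 0) (Set.Ioi 0) ∧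
      ∫ s in Set.Ioi (0 : ℝ), σ * (if s < σ then s ^ (p - 1 - 1) else 0)
        = (p - 1)⁻¹ * σ ^ p := by
  have h := integral_Ioi_rpow_ite_lt (sub_pos.2 hp) hσ
  refine ⟨h.1.const_mul σ, ?_⟩
  rw [integral_const_mul, h.2, ← mul_div_assoc, ← Real.rpow_one_add' hσ (by linarith),
    add_sub_cancel, div_eq_inv_mul]

lemma integral_rpow_mul_rpow_ite_le {r σ : ℝ} (hp : 0 < p) (hr : p < r) (hσ : 0 ≤ σ) :
    IntegrableOn (fun s : ℝ => σ ^ r * if σ ≤ s then s ^ (p - r - 1) else 0) (Set.Ioi 0) ∧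
      ∫ s in Set.Ioi (0 : ℝ), σ ^ r * (if σ ≤ s then s ^ (p - r - 1) else 0)
        = (r - p)⁻¹ * σ ^ p := by
  rcases hσ.eq_or_lt with rfl | hσ
  · simp [Real.zero_rpow hp.ne', Real.zero_rpow (hp.trans hr).ne']
  · have h := integral_Ioi_rpow_ite_le (sub_neg.2 hr) hσ
    refine ⟨h.1.const_mul _, ?_⟩
    rw [integral_const_mul, h.2, neg_sub, ← mul_div_assoc, ← Real.rpow_add hσ, add_sub_cancel,
      div_eq_inv_mul]

end LayerCake

/-! ### Strong-type bounds -/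

section StrongType

variable {K : ℕ} {v : ℕ → ℝ} {p q c : ℝ} {P Q : Set (Matrix (Fin d) (Fin d) ℂ)}

/-- The martingale transform by `v` satisfies `𝔼 ‖T x‖_p^p ≤ c 𝔼 ‖x‖_p^p` for `P`-valued `x`. -/
def StrongTypeOn (P : Set (Matrix (Fin d) (Fin d) ℂ)) (K : ℕ) (v : ℕ → ℝ) (p c : ℝ) : Prop :=
  ∀ x : DyadicSpace K → Matrix (Fin d) (Fin d) ℂ, (∀ ω, x ω ∈ P) →
    dyadicMean K (fun ω => schattenSum p (martingaleTransform K v x ω))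
      ≤ c * dyadicMean K (fun ω => schattenSum p (x ω))

lemma StrongTypeOn.mono (h : StrongTypeOn P K v p c) (hQP : Q ⊆ P) : StrongTypeOn Q K v p c :=
  fun x hx => h x fun ω => hQP (hx ω)

lemma StrongTypeOn.mono_const {c' : ℝ} (h : StrongTypeOn P K v p c) (hc : c ≤ c') :
    StrongTypeOn P K v p c' := fun x hx =>
  (h x hx).trans <| mul_le_mul_of_nonneg_right hc <|
    dyadicMean_nonneg K fun ω => schattenSum_nonneg p (x ω)

lemma strongTypeOn_two (hv : ∀ i, |v i| ≤ 1) : StrongTypeOn P K v 2 1 := fun x _ => by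
  simp only [schattenSum_two, one_mul]
  linarith [dyadicMean_hsNormSq_martingaleTransform_le K hv x, hsNormSq_nonneg (dyadicMean K x)]

lemma schattenSum_smul_div_add_inv_smul_div (hpq : p.HolderConjugate q) (hc : 0 < c)
    (A B : Matrix (Fin d) (Fin d) ℂ) :
    schattenSum p (c ^ (1 / q) • A) / p + schattenSum q ((c ^ (1 / q))⁻¹ • B) / q
      = c ^ (p - 1) / p * schattenSum p A + c⁻¹ / q * schattenSum q B := by
  set t := c ^ (1 / q)
  have ht : 0 < t := Real.rpow_pos_of_pos hc _
  have htp : t ^ p = c ^ (p - 1) := by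
    rw [← Real.rpow_mul hc.le, one_div_mul_eq_div, hpq.div_conj_eq_sub_one]
  have htq : t⁻¹ ^ q = c⁻¹ := by
    rw [Real.inv_rpow ht.le, ← Real.rpow_mul hc.le, one_div_mul_cancel hpq.symm.ne_zero,
      Real.rpow_one]
  rw [schattenSum_real_smul ht.le, schattenSum_real_smul (inv_nonneg.2 ht.le), htp, htq]
  ring

lemma reTrace_mul_le_scaled (hpq : p.HolderConjugate q) (hc : 0 < c)
    (A B : Matrix (Fin d) (Fin d) ℂ) :
    reTrace (A * B) ≤ c ^ (p - 1) / p * schattenSum p A + c⁻¹ / q * schattenSum q B := by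
  have hyoung := reTrace_mul_le (c ^ (1 / q) • A) ((c ^ (1 / q))⁻¹ • B) hpq
  rwa [Matrix.smul_mul, Matrix.mul_smul, smul_inv_smul₀ (Real.rpow_pos_of_pos hc _).ne',
    schattenSum_smul_div_add_inv_smul_div hpq hc] at hyoung

lemma StrongTypeOn.dual (hpq : p.HolderConjugate q) (hc : 0 < c)
    (h : StrongTypeOn (d := d) Set.univ K v q c) :
    StrongTypeOn (d := d) Set.univ K v p (c ^ (p - 1)) := by
  intro x _
  choose w hw_trace hw_norm using fun ω =>
    exists_reTrace_mul_eq_schattenSum (martingaleTransform K v x ω) hpq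
  set N := dyadicMean K fun ω => schattenSum p (martingaleTransform K v x ω)
  set X := dyadicMean K fun ω => schattenSum p (x ω)
  have hpair : N ≤ c ^ (p - 1) / p * X
      + c⁻¹ / q * dyadicMean K fun ω => schattenSum q (martingaleTransform K v w ω) := by
    simp only [N, ← hw_trace, reTrace_martingaleTransform_mul]
    rw [← dyadicMean_mul, ← dyadicMean_mul, ← dyadicMean_add]
    exact dyadicMean_mono K fun ω => reTrace_mul_le_scaled hpq hc _ _
  have hdual := h w fun ω => Set.mem_univ _
  simp only [hw_norm] at hdual
  have hq := hpq.symm.pos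
  have habsorb : c⁻¹ / q * dyadicMean K (fun ω => schattenSum q (martingaleTransform K v w ω))
      ≤ q⁻¹ * N :=
    (mul_le_mul_of_nonneg_left hdual (by positivity)).trans_eq (by field_simp; rfl)
  have hfinal : p⁻¹ * N ≤ p⁻¹ * (c ^ (p - 1) * X) := by
    have : p⁻¹ * N = N - q⁻¹ * N := by rw [← hpq.one_sub_inv]; ring
    have : p⁻¹ * (c ^ (p - 1) * X) = c ^ (p - 1) / p * X := by ring
    linarith
  exact le_of_mul_le_mul_left hfinal (inv_pos.2 hpq.pos)

lemma StrongTypeOn.of_decomposition (hp : 0 < p) (hc : 0 ≤ c) (h : StrongTypeOn P K v p c) {u : ℂ}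
    (hu : ‖u‖ = 1) {M : ℝ} (hdec : ∀ A ∈ Q, ∃ a ∈ P, ∃ b ∈ P, A = a + u • b ∧
      schattenSum p a ≤ M * schattenSum p A ∧ schattenSum p b ≤ M * schattenSum p A) :
    StrongTypeOn Q K v p (2 ^ p * (2 * M) * c) := by
  intro x hx
  choose a ha b hb hab hna hnb using fun ω => hdec (x ω) (hx ω)
  have htransform : ∀ ω, martingaleTransform K v x ω
      = martingaleTransform K v a ω + u • martingaleTransform K v b ω := fun ω => by
    rw [funext hab, martingaleTransform_add]
    exact congrArg _ (martingaleTransform_map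
      ((LinearMap.lsmul ℂ (Matrix (Fin d) (Fin d) ℂ) u).restrictScalars ℝ) K v b ω)
  have hbound : ∀ y : DyadicSpace K → Matrix (Fin d) (Fin d) ℂ, (∀ ω, y ω ∈ P) →
      (∀ ω, schattenSum p (y ω) ≤ M * schattenSum p (x ω)) →
      dyadicMean K (fun ω => schattenSum p (martingaleTransform K v y ω))
        ≤ c * (M * dyadicMean K fun ω => schattenSum p (x ω)) := fun y hy hyx => by
    rw [← dyadicMean_mul M]
    exact (h y hy).trans (mul_le_mul_of_nonneg_left (dyadicMean_mono K hyx) hc)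
  calc _ ≤ dyadicMean K (fun ω => 2 ^ p * (schattenSum p (martingaleTransform K v a ω)
        + schattenSum p (martingaleTransform K v b ω))) := dyadicMean_mono K fun ω => by
        rw [htransform, ← schattenSum_smul_of_norm_eq_one hu (martingaleTransform K v b ω)]
        exact schattenSum_add_le _ _ hp
    _ = 2 ^ p * (dyadicMean K (fun ω => schattenSum p (martingaleTransform K v a ω))
        + dyadicMean K fun ω => schattenSum p (martingaleTransform K v b ω)) := by
        rw [dyadicMean_mul, dyadicMean_add]
    _ ≤ 2 ^ p * (c * (M * dyadicMean K fun ω => schattenSum p (x ω))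
        + c * (M * dyadicMean K fun ω => schattenSum p (x ω))) := by
        gcongr
        exacts [hbound a ha hna, hbound b hb hnb]
    _ = _ := by ring

lemma exists_nonneg_sub_of_isHermitian (hA : A.IsHermitian) (hp : 0 ≤ p) :
    ∃ a, 0 ≤ a ∧ ∃ b, 0 ≤ b ∧ A = a + (-1 : ℂ) • b ∧
      schattenSum p a ≤ 1 * schattenSum p A ∧ schattenSum p b ≤ 1 * schattenSum p A := by
  refine ⟨cfc (fun x : ℝ => max x 0) A, cfc_nonneg fun x _ => le_max_right _ _,
    cfc (fun x : ℝ => max (-x) 0) A, cfc_nonneg fun x _ => le_max_right _ _, ?_, ?_, ?_⟩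
  · rw [neg_one_smul, ← sub_eq_add_neg,
      ← cfc_sub _ _ A (continuousOn_spectrum A _) (continuousOn_spectrum A _)]
    simp only [max_zero_sub_max_neg_zero_eq_self]
    exact (cfc_id' ℝ A hA.isSelfAdjoint).symm
  · rw [one_mul]
    refine schattenSum_cfc_le hA (fun x => ?_) hp
    rw [abs_of_nonneg (le_max_right _ _)]
    exact max_le (le_abs_self _) (abs_nonneg _)
  · rw [one_mul]
    refine schattenSum_cfc_le hA (fun x => ?_) hp
    rw [abs_of_nonneg (le_max_right _ _)]
    exact max_le (neg_le_abs _) (abs_nonneg _)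

lemma schattenSum_half_smul_add_le (hp : 0 < p) (h : schattenSum p B = schattenSum p A) :
    schattenSum p ((2 : ℝ)⁻¹ • (A + B)) ≤ 2 * schattenSum p A := by
  rw [schattenSum_real_smul (by norm_num)]
  calc _ ≤ (2 : ℝ)⁻¹ ^ p * (2 ^ p * (schattenSum p A + schattenSum p B)) := by
        gcongr
        exact schattenSum_add_le A B hp
    _ = _ := by
        rw [h, Real.inv_rpow two_pos.le, inv_mul_cancel_left₀ (by positivity), two_mul]

open scoped ComplexStarModule in
lemma exists_isHermitian_add_I_smul (A : Matrix (Fin d) (Fin d) ℂ) (hp : 0 < p) :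
    ∃ a, a.IsHermitian ∧ ∃ b, b.IsHermitian ∧ A = a + Complex.I • b ∧
      schattenSum p a ≤ 2 * schattenSum p A ∧ schattenSum p b ≤ 2 * schattenSum p A := by
  refine ⟨ℜ A, (ℜ A).2, ℑ A, (ℑ A).2, (realPart_add_I_smul_imaginaryPart A).symm, ?_, ?_⟩
  · rw [realPart_apply_coe]
    exact schattenSum_half_smul_add_le hp (schattenSum_conjTranspose A p)
  · rw [imaginaryPart_apply_coe, schattenSum_smul_of_norm_eq_one (by simp), sub_eq_add_neg]
    refine schattenSum_half_smul_add_le hp ?_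
    rw [← neg_one_smul ℂ, schattenSum_smul_of_norm_eq_one (by simp)]
    exact schattenSum_conjTranspose A p

lemma StrongTypeOn.of_nonneg (hp : 0 < p) (hc : 0 ≤ c)
    (h : StrongTypeOn (d := d) (Set.Ici 0) K v p c) :
    StrongTypeOn (d := d) Set.univ K v p (8 * 4 ^ p * c) := by
  have hherm : StrongTypeOn {A : Matrix (Fin d) (Fin d) ℂ | A.IsHermitian} K v p _ :=
    h.of_decomposition hp hc (by simp) fun A hA => exists_nonneg_sub_of_isHermitian hA hp.le
  refine (hherm.of_decomposition (Q := Set.univ) hp (by positivity) Complex.norm_I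
    fun A _ => exists_isHermitian_add_I_smul A hp).mono_const (le_of_eq ?_)
  rw [show (4 : ℝ) = 2 * 2 by norm_num, Real.mul_rpow two_pos.le two_pos.le]
  ring

/-! ### Marcinkiewicz interpolation -/

lemma exists_truncation (hA : 0 ≤ A) {r : ℝ} (hr : 0 < r) (s : ℝ) :
    ∃ a b, 0 ≤ a ∧ 0 ≤ b ∧ A = a + b ∧
      reTrace a = ∑ i, (if s < singularValues A i then singularValues A i else 0) ∧
      schattenSum r b = ∑ i, (if singularValues A i ≤ s then singularValues A i ^ r else 0) := by
  have hpsd := nonneg_iff_posSemidef.1 hA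
  have hspec : ∀ x ∈ spectrum ℝ A, 0 ≤ x := fun x hx => spectrum_nonneg_of_nonneg hA hx
  have hhigh : 0 ≤ cfc (fun x => if s < x then x else 0) A := cfc_nonneg fun x hx => by
    split_ifs <;> simp [hspec x hx]
  refine ⟨cfc (fun x => if s < x then x else 0) A, cfc (fun x => if x ≤ s then x else 0) A,
    hhigh, cfc_nonneg fun x hx => by split_ifs <;> simp [hspec x hx], ?_, ?_, ?_⟩
  · rw [← cfc_add _ _ _ (continuousOn_spectrum A _) (continuousOn_spectrum A _)]
    refine (cfc_id ℝ A hpsd.isHermitian.isSelfAdjoint).symm.trans (cfc_congr fun x _ => ?_)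
    rcases lt_or_ge s x with h | h
    · simp [h]
    · simp [h, not_lt.2 h]
  · rw [reTrace_eq_schattenSum_one hhigh, schattenSum,
      sum_singularValues_cfc hpsd.isHermitian _ (· ^ (1 : ℝ)),
      sum_singularValues_of_nonneg hA fun σ => if s < σ then σ else 0]
    refine sum_congr rfl fun i _ => ?_
    rw [Real.rpow_one, abs_of_nonneg]
    split_ifs
    exacts [hpsd.eigenvalues_nonneg i, le_rfl]
  · rw [schattenSum, sum_singularValues_cfc hpsd.isHermitian _ (· ^ r),
      sum_singularValues_of_nonneg hA fun σ => if σ ≤ s then σ ^ r else 0]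
    refine sum_congr rfl fun i _ => ?_
    split_ifs
    · rw [abs_of_nonneg (hpsd.eigenvalues_nonneg i)]
    · rw [abs_zero, Real.zero_rpow hr.ne']

lemma svCount_le_schattenSum {r s : ℝ} (hr : 0 ≤ r) (hs : 0 < s) (A : Matrix (Fin d) (Fin d) ℂ) :
    svCount A s ≤ schattenSum r A / s ^ r := by
  rw [le_div_iff₀ (Real.rpow_pos_of_pos hs r), svCount_eq_sum, sum_mul]
  refine sum_le_sum fun i _ => ?_
  split_ifs with h
  · rw [one_mul]
    exact Real.rpow_le_rpow hs.le h.le hr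
  · rw [zero_mul]
    exact Real.rpow_nonneg (singularValues_nonneg A i) r

lemma dyadicMean_svCount_martingaleTransform_le (hv : ∀ i, |v i| ≤ 1) {r s : ℝ} (hr : 0 < r)
    (h : StrongTypeOn (d := d) (Set.Ici 0) K v r c) {x : DyadicSpace K → Matrix (Fin d) (Fin d) ℂ}
    (hx : ∀ ω, 0 ≤ x ω) (hs : 0 < s) :
    dyadicMean K (fun ω => (svCount (martingaleTransform K v x ω) (2 * s) : ℝ)) ≤
      4 / s * dyadicMean K (fun ω =>
        ∑ i, if s < singularValues (x ω) i then singularValues (x ω) i else 0) +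
      c / s ^ r * dyadicMean K (fun ω =>
        ∑ i, if singularValues (x ω) i ≤ s then singularValues (x ω) i ^ r else 0) := by
  choose a b ha hb hab htrace hsum using fun ω => exists_truncation (hx ω) hr s
  simp only [← htrace, ← hsum]
  have hsplit : ∀ ω, (svCount (martingaleTransform K v x ω) (2 * s) : ℝ)
      ≤ svCount (martingaleTransform K v a ω) s
        + (s ^ r)⁻¹ * schattenSum r (martingaleTransform K v b ω) := fun ω => by
    have hcount := svCount_add_le (martingaleTransform K v a ω) (martingaleTransform K v b ω)
      hs.le hs.le
    have hlow := svCount_le_schattenSum hr.le hs (martingaleTransform K v b ω)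
    rw [div_eq_inv_mul] at hlow
    rw [funext hab, martingaleTransform_add, two_mul]
    exact le_trans (by exact_mod_cast hcount) (add_le_add_right hlow _)
  refine (dyadicMean_mono K hsplit).trans ?_
  rw [dyadicMean_add, dyadicMean_mul, div_mul_eq_mul_div c, div_eq_inv_mul (c * _)]
  have := h b hb
  gcongr
  exact svCount_martingaleTransform_weak_type K hv ha hs

lemma StrongTypeOn.interpolate (hv : ∀ i, |v i| ≤ 1) {r : ℝ} (hp : 1 < p) (hr : p < r)
    (h : StrongTypeOn (d := d) (Set.Ici 0) K v r c) :
    StrongTypeOn (d := d) (Set.Ici 0) K v p (2 ^ p * p * (4 / (p - 1) + c / (r - p))) := by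
  intro x hx
  have hp₀ : 0 < p := zero_lt_one.trans hp
  have hcount := integral_dyadicMean_svCount hp₀ two_pos (martingaleTransform K v x)
  have hhigh := integral_dyadicMean_sum_singularValues
    (fun σ hσ => integral_mul_rpow_ite_lt hp hσ) x
  have hlow := integral_dyadicMean_sum_singularValues
    (fun σ hσ => integral_rpow_mul_rpow_ite_le hp₀ hr hσ) x
  have hmono := MeasureTheory.setIntegral_mono_on hcount.1
    ((hhigh.1.const_mul 4).add (hlow.1.const_mul c)) measurableSet_Ioi fun s hs => by
      have hs : (0 : ℝ) < s := hs
      refine (mul_le_mul_of_nonneg_left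
        (dyadicMean_svCount_martingaleTransform_le hv (hp₀.trans hr) h hx hs)
        (Real.rpow_nonneg hs.le (p - 1))).trans_eq ?_
      simp only [Pi.add_apply, mul_add, ← dyadicMean_mul, mul_sum, mul_ite, mul_zero]
      rw [sub_right_comm p r 1, Real.rpow_sub_one hs.ne' (p - 1), Real.rpow_sub hs (p - 1) r]
      congr 2 <;> refine funext fun ω => sum_congr rfl fun i _ => ?_ <;> split_ifs <;> ring
  simp only [Pi.add_apply] at hmono
  rw [MeasureTheory.integral_add (hhigh.1.const_mul 4) (hlow.1.const_mul c),
    MeasureTheory.integral_const_mul, MeasureTheory.integral_const_mul, hcount.2, hhigh.2, hlow.2,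
    inv_mul_le_iff₀ (by positivity)] at hmono
  exact hmono.trans_eq (by ring)

-- Interpolating down from `r = 2` would leave no constant uniform near `p = 2`, hence the detour
-- from `3 / 2` to its conjugate exponent `3`.
lemma exists_strongTypeOn_univ : ∃ C : ℝ, 1 ≤ C ∧ ∀ p : ℝ, 1 < p → p ≤ 2 →
    ∀ (d K : ℕ) (v : ℕ → ℝ), (∀ i, |v i| ≤ 1) →
      StrongTypeOn (d := d) Set.univ K v p (C / (p - 1)) := by
  set C₁ : ℝ := 8 * 4 ^ (3 / 2 : ℝ) *
    (2 ^ (3 / 2 : ℝ) * (3 / 2) * (4 / (3 / 2 - 1) + 1 / (2 - 3 / 2)))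
  set C₂ : ℝ := C₁ ^ (3 - 1 : ℝ)
  have hC₁ : 0 < C₁ := by positivity
  have hC₂ : 0 < C₂ := by positivity
  refine ⟨8 * 4 ^ (2 : ℝ) * (2 ^ (2 : ℝ) * 2 * (4 + C₂)), by norm_num; nlinarith, ?_⟩
  intro p hp hp2 d K v hv
  have hp1 : 0 < p - 1 := by linarith
  have h3p : 0 < 3 - p := by linarith
  have hthreeHalves : StrongTypeOn (d := d) Set.univ K v (3 / 2) C₁ :=
    ((strongTypeOn_two hv).interpolate hv (by norm_num) (by norm_num)).of_nonneg
      (by norm_num) (by positivity)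
  have hthree : StrongTypeOn (d := d) Set.univ K v 3 C₂ :=
    hthreeHalves.dual (Real.holderConjugate_iff.2 ⟨by norm_num, by norm_num⟩) hC₁
  refine (((hthree.mono (Set.subset_univ _)).interpolate hv hp (by linarith)).of_nonneg
    (by linarith) (by positivity)).mono_const ?_
  have hdiv : C₂ / (3 - p) ≤ C₂ / (p - 1) :=
    div_le_div_of_nonneg_left hC₂.le hp1 (by linarith)
  calc 8 * 4 ^ p * (2 ^ p * p * (4 / (p - 1) + C₂ / (3 - p)))
      ≤ 8 * 4 ^ (2 : ℝ) * (2 ^ (2 : ℝ) * 2 * (4 / (p - 1) + C₂ / (p - 1))) := by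
        gcongr 8 * ?_ * (?_ * ?_ * (_ + ?_))
        · gcongr; norm_num
        · gcongr; norm_num
    _ = _ := by ring

end StrongType

/-! ### Transference by random phases -/

/-- The factor `exp (± i t)` of a random phase, its sign given by the toss `b`. -/
noncomputable def tossPhase (t : ℝ) (b : Bool) : ℂ :=
  Complex.exp ((if b then t else -t : ℝ) * Complex.I)

/-- The random phase `∏ₖ exp (± i gₖ)`, the signs being the tosses. -/
noncomputable def phase : (K : ℕ) → (ℕ → ℝ) → DyadicSpace K → ℂ
  | 0, _ => fun _ => 1
  | K + 1, g => fun ω => tossPhase (g 0) ω.1 * phase K (fun k => g (k + 1)) ω.2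

/-- The mean `∏ₖ cos gₖ` of the random phase. -/
noncomputable def cosProd (K : ℕ) (g : ℕ → ℝ) : ℝ := ∏ k ∈ range K, Real.cos (g k)

/-- The number `∑ₖ vₖ sin² gₖ ∏_{j > k} cos² gⱼ`, by which the martingale transform by `v` pairs the
random phase with itself. -/
noncomputable def transferValue : ℕ → (ℕ → ℝ) → (ℕ → ℝ) → ℝ
  | 0, _, _ => 0
  | K + 1, v, g => v 0 * Real.sin (g 0) ^ 2 * cosProd K (fun k => g (k + 1)) ^ 2
      + transferValue K (fun k => v (k + 1)) (fun k => g (k + 1))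

lemma phase_succ (K : ℕ) (g : ℕ → ℝ) (b : Bool) (ω : DyadicSpace K) :
    phase (K + 1) g (b, ω) = tossPhase (g 0) b * phase K (fun k => g (k + 1)) ω := rfl

lemma cosProd_succ (K : ℕ) (g : ℕ → ℝ) :
    cosProd (K + 1) g = Real.cos (g 0) * cosProd K fun k => g (k + 1) := by
  rw [cosProd, prod_range_succ', mul_comm, cosProd]

lemma norm_tossPhase (t : ℝ) (b : Bool) : ‖tossPhase t b‖ = 1 := Complex.norm_exp_ofReal_mul_I _

lemma tossPhase_mul_star (t : ℝ) (b : Bool) : tossPhase t b * star (tossPhase t b) = 1 := by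
  rw [Complex.star_def, Complex.mul_conj', norm_tossPhase, Complex.ofReal_one, one_pow]

lemma star_tossPhase (t : ℝ) (b : Bool) : star (tossPhase t b) = tossPhase (-t) b := by
  rw [tossPhase, Complex.star_def, ← Complex.exp_conj, map_mul, Complex.conj_I, Complex.conj_ofReal,
    tossPhase]
  cases b <;> simp

lemma tossPhase_add (s t : ℝ) (b : Bool) :
    tossPhase (s + t) b = tossPhase s b * tossPhase t b := by
  rw [tossPhase, tossPhase, tossPhase, ← Complex.exp_add, ← add_mul, ← Complex.ofReal_add]
  cases b <;> simp only [Bool.false_eq_true, if_false, if_true, neg_add]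

lemma tossPhase_false_add_true (t : ℝ) :
    tossPhase t false + tossPhase t true = 2 * (Real.cos t : ℝ) := by
  rw [Complex.ofReal_cos, Complex.two_cos, add_comm]
  simp [tossPhase]

lemma norm_phase (K : ℕ) (g : ℕ → ℝ) (ω : DyadicSpace K) : ‖phase K g ω‖ = 1 := by
  induction K generalizing g with
  | zero => exact norm_one
  | succ K ih =>
    obtain ⟨b, ω⟩ := ω
    rw [phase_succ, norm_mul, norm_tossPhase, ih, one_mul]

lemma phase_sub (K : ℕ) (g h : ℕ → ℝ) (ω : DyadicSpace K) :
    phase K (fun k => g k - h k) ω = phase K g ω * star (phase K h ω) := by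
  induction K generalizing g h with
  | zero => simp [phase]
  | succ K ih =>
    obtain ⟨b, ω⟩ := ω
    rw [phase_succ, phase_succ, phase_succ, ih (fun k => g (k + 1)) (fun k => h (k + 1)),
      sub_eq_add_neg, tossPhase_add, ← star_tossPhase, star_mul']
    ring

lemma dyadicMean_const_mul (c : ℂ) (K : ℕ) (x : DyadicSpace K → ℂ) :
    dyadicMean K (fun ω => c * x ω) = c * dyadicMean K x :=
  dyadicMean_map (LinearMap.mulLeft ℝ c) K x

lemma martingaleTransform_const_mul (c : ℂ) (K : ℕ) (v : ℕ → ℝ) (x : DyadicSpace K → ℂ)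
    (ω : DyadicSpace K) :
    martingaleTransform K v (fun ω => c * x ω) ω = c * martingaleTransform K v x ω :=
  martingaleTransform_map (LinearMap.mulLeft ℝ c) K v x ω

lemma dyadicMean_star (K : ℕ) (x : DyadicSpace K → ℂ) :
    dyadicMean K (fun ω => star (x ω)) = star (dyadicMean K x) :=
  dyadicMean_map Complex.conjAe.toLinearMap K x

lemma dyadicMean_sum {ι : Type*} (s : Finset ι) (K : ℕ) (x : ι → DyadicSpace K → ℝ) :
    dyadicMean K (fun ω => ∑ i ∈ s, x i ω) = ∑ i ∈ s, dyadicMean K (x i) := by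
  classical
  induction s using Finset.induction_on with
  | empty => simp only [sum_empty, dyadicMean_const]
  | insert i s hi ih => simp only [sum_insert hi, dyadicMean_add, ih]

lemma dyadicMean_phase (K : ℕ) (g : ℕ → ℝ) : dyadicMean K (phase K g) = (cosProd K g : ℂ) := by
  induction K generalizing g with
  | zero => simp [dyadicMean, phase, cosProd]
  | succ K ih =>
    have hbit (b : Bool) : dyadicMean K (fun ω => phase (K + 1) g (b, ω))
        = tossPhase (g 0) b * cosProd K fun k => g (k + 1) := by
      simp only [phase_succ, dyadicMean_const_mul]
      rw [← ih]
    rw [dyadicMean_succ, hbit, hbit, ← add_mul, tossPhase_false_add_true, cosProd_succ,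
      Complex.real_smul]
    push_cast
    ring

lemma dyadicMean_martingaleTransform_phase_mul_star (K : ℕ) (v g : ℕ → ℝ) :
    dyadicMean K (fun ω => martingaleTransform K v (phase K g) ω * star (phase K g ω))
      = (transferValue K v g : ℂ) := by
  induction K generalizing v g with
  | zero => simp [dyadicMean, martingaleTransform, transferValue]
  | succ K ih =>
    set g' : ℕ → ℝ := fun k => g (k + 1)
    set v' : ℕ → ℝ := fun k => v (k + 1)
    have hbit (b : Bool) : dyadicMean K (fun ω =>
        martingaleTransform (K + 1) v (phase (K + 1) g) (b, ω) * star (phase (K + 1) g (b, ω)))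
        = v 0 * (1 - star (tossPhase (g 0) b) * Real.cos (g 0)) * cosProd K g' ^ 2
          + transferValue K v' g' := by
      have hpoint (ω : DyadicSpace K) :
          martingaleTransform (K + 1) v (phase (K + 1) g) (b, ω) * star (phase (K + 1) g (b, ω))
          = v 0 * (1 - star (tossPhase (g 0) b) * Real.cos (g 0)) * cosProd K g'
              * star (phase K g' ω)
            + martingaleTransform K v' (phase K g') ω * star (phase K g' ω) := by
        simp only [martingaleTransform_succ, dyadicMean_phase, phase_succ,
          martingaleTransform_const_mul, dyadicMean_const_mul, cosProd_succ, star_mul',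
          Complex.real_smul, g', v']
        push_cast
        linear_combination (v 0 * (cosProd K g' : ℂ) * star (phase K g' ω)
          + martingaleTransform K v' (phase K g') ω * star (phase K g' ω))
            * tossPhase_mul_star (g 0) b
      simp only [hpoint]
      rw [dyadicMean_add, dyadicMean_const_mul, dyadicMean_star, dyadicMean_phase, ih,
        Complex.star_def, Complex.conj_ofReal]
      ring
    have hcos : star (tossPhase (g 0) false) + star (tossPhase (g 0) true)
        = 2 * (Real.cos (g 0) : ℝ) := by
      rw [star_tossPhase, star_tossPhase, tossPhase_false_add_true, Real.cos_neg]
    rw [dyadicMean_succ, hbit, hbit, transferValue, Real.sin_sq, Complex.real_smul]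
    push_cast at hcos ⊢
    linear_combination (-(1 / 2 : ℂ) * v 0 * cosProd K g' ^ 2 * Complex.cos (g 0)) * hcos

/-- The Schur multiplier with symbol `m`, paired with the dual exponent, is bounded by `C` in the
sense of Young's inequality; by homogeneity this is the bound `C` on its Schatten `p`-norm. -/
def SchurBound (p q C : ℝ) (m : Fin d → Fin d → ℝ) : Prop :=
  ∀ y w : Matrix (Fin d) (Fin d) ℂ,
    ∑ i, ∑ k, m i k * (y i k * w k i).re ≤ C * (schattenSum p y / p + schattenSum q w / q)

/-- Conjugation of `A` by the random diagonal unitary with the phases of `g k i` at position `i`. -/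
noncomputable def phaseConj (K : ℕ) (g : ℕ → Fin d → ℝ) (A : Matrix (Fin d) (Fin d) ℂ)
    (ω : DyadicSpace K) : Matrix (Fin d) (Fin d) ℂ :=
  diagonal (fun i => phase K (fun k => g k i) ω) * A *
    (diagonal fun i => phase K (fun k => g k i) ω)ᴴ

section Transference

variable {K : ℕ} (g : ℕ → Fin d → ℝ) (A : Matrix (Fin d) (Fin d) ℂ) (ω : DyadicSpace K)

lemma phaseConj_apply (i k : Fin d) :
    phaseConj K g A ω i k = A i k * phase K (fun j => g j i - g j k) ω := by
  rw [phaseConj, diagonal_conjTranspose, mul_diagonal, diagonal_mul, Pi.star_apply,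
    phase_sub K (fun j => g j i) fun j => g j k]
  ring

lemma phaseConj_apply_swap (i k : Fin d) :
    phaseConj K g A ω k i = A k i * star (phase K (fun j => g j i - g j k) ω) := by
  rw [phaseConj_apply, phase_sub K (fun j => g j i) fun j => g j k,
    phase_sub K (fun j => g j k) fun j => g j i, star_mul', star_star, mul_comm (phase _ _ _)]

lemma schattenSum_phaseConj (p : ℝ) : schattenSum p (phaseConj K g A ω) = schattenSum p A := by
  have hU : diagonal (fun i => phase K (fun k => g k i) ω) ∈ unitaryGroup (Fin d) ℂ := by
    rw [mem_unitaryGroup_iff, star_eq_conjTranspose, diagonal_conjTranspose, diagonal_mul_diagonal,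
      ← diagonal_one]
    congr 1 with i
    rw [Pi.star_apply, Complex.star_def, Complex.mul_conj', norm_phase, Complex.ofReal_one, one_pow]
  exact schattenSum_unitary_mul_mul hU (conjTranspose_mem_unitaryGroup hU) A p

lemma dyadicMean_reTrace_phaseConj (v : ℕ → ℝ) (y w : Matrix (Fin d) (Fin d) ℂ) :
    dyadicMean K (fun ω => reTrace (martingaleTransform K v (phaseConj K g y) ω *
        phaseConj K g w ω))
      = ∑ i, ∑ k, transferValue K v (fun j => g j i - g j k) * (y i k * w k i).re := by
  have hentry (ω : DyadicSpace K) (i k : Fin d) : martingaleTransform K v (phaseConj K g y) ω i k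
      = y i k * martingaleTransform K v (phase K fun j => g j i - g j k) ω := by
    rw [← martingaleTransform_const_mul]
    simp only [← phaseConj_apply]
    exact (martingaleTransform_map (entryLinearMap ℝ ℂ i k) K v _ ω).symm
  have htrace (ω : DyadicSpace K) :
      reTrace (martingaleTransform K v (phaseConj K g y) ω * phaseConj K g w ω)
      = ∑ i, ∑ k, (Complex.reLm ∘ₗ LinearMap.mulLeft ℝ (y i k * w k i))
          (martingaleTransform K v (phase K fun j => g j i - g j k) ω
            * star (phase K (fun j => g j i - g j k) ω)) := by
    refine (Complex.re_sum _ _).trans (sum_congr rfl fun i _ => ?_)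
    rw [diag_apply, Matrix.mul_apply, Complex.re_sum]
    refine sum_congr rfl fun k _ => ?_
    rw [hentry, phaseConj_apply_swap]
    exact congrArg Complex.re (mul_mul_mul_comm _ _ _ _)
  simp only [htrace, dyadicMean_sum, dyadicMean_map, dyadicMean_martingaleTransform_phase_mul_star]
  refine sum_congr rfl fun i _ => sum_congr rfl fun k _ => ?_
  exact (Complex.re_mul_ofReal _ _).trans (mul_comm _ _)

lemma schurBound_transferValue {p q C : ℝ} (hpq : p.HolderConjugate q) (hC : 1 ≤ C) {v : ℕ → ℝ}
    (h : StrongTypeOn (d := d) Set.univ K v p C) :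
    SchurBound p q C fun i k => transferValue K v fun j => g j i - g j k := by
  intro y w
  have hp := hpq.pos
  have hq := hpq.symm.pos
  have hstrong := h (phaseConj K g y) fun _ => Set.mem_univ _
  simp only [schattenSum_phaseConj, dyadicMean_const] at hstrong
  rw [← dyadicMean_reTrace_phaseConj]
  calc _ ≤ dyadicMean K (fun ω =>
        p⁻¹ * schattenSum p (martingaleTransform K v (phaseConj K g y) ω) + schattenSum q w / q) :=
        dyadicMean_mono K fun ω => (reTrace_mul_le _ _ hpq).trans_eq <| by
          rw [schattenSum_phaseConj, div_eq_inv_mul]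
    _ ≤ p⁻¹ * (C * schattenSum p y) + schattenSum q w / q := by
        rw [dyadicMean_add, dyadicMean_mul, dyadicMean_const]
        gcongr
    _ ≤ p⁻¹ * (C * schattenSum p y) + C * (schattenSum q w / q) := by
        gcongr
        exact le_mul_of_one_le_left (div_nonneg (schattenSum_nonneg q w) hq.le) hC
    _ = _ := by ring

end Transference

/-! ### The cone of infinitesimal generators -/

/-- Symbols of transferred martingale transforms, with coefficients bounded by `1`, and their limits
of convex combinations. -/
def transferMultipliers (ι : Type*) : Set (ι → ι → ℝ) :=
  closedConvexHull ℝ {m | ∃ (K : ℕ) (v : ℕ → ℝ) (g : ℕ → ι → ℝ), (∀ i, |v i| ≤ 1) ∧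
    m = fun i k => transferValue K v fun j => g j i - g j k}

lemma isClosed_setOf_schurBound (p q C : ℝ) :
    IsClosed {m : Fin d → Fin d → ℝ | SchurBound p q C m} := by
  simp only [SchurBound, Set.ofPred_forall]
  exact isClosed_iInter fun y => isClosed_iInter fun w => isClosed_le (by fun_prop) continuous_const

lemma convex_setOf_schurBound (p q C : ℝ) :
    Convex ℝ {m : Fin d → Fin d → ℝ | SchurBound p q C m} := by
  intro m hm m' hm' a b ha hb hab y w
  calc _ = a * ∑ i, ∑ k, m i k * (y i k * w k i).re
          + b * ∑ i, ∑ k, m' i k * (y i k * w k i).re := by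
        simp only [mul_sum, ← sum_add_distrib, Pi.add_apply, Pi.smul_apply, smul_eq_mul, add_mul,
          mul_assoc]
    _ ≤ a * (C * (schattenSum p y / p + schattenSum q w / q))
        + b * (C * (schattenSum p y / p + schattenSum q w / q)) := by
        gcongr
        exacts [hm y w, hm' y w]
    _ = _ := by rw [← add_mul, hab, one_mul]

lemma schurBound_of_mem_transferMultipliers {p q C : ℝ} (hpq : p.HolderConjugate q) (hC : 1 ≤ C)
    (h : ∀ (K : ℕ) (v : ℕ → ℝ), (∀ i, |v i| ≤ 1) → StrongTypeOn (d := d) Set.univ K v p C)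
    {m : Fin d → Fin d → ℝ} (hm : m ∈ transferMultipliers (Fin d)) : SchurBound p q C m := by
  refine closedConvexHull_min ?_ (convex_setOf_schurBound p q C)
    (isClosed_setOf_schurBound p q C) hm
  rintro m ⟨K, v, g, hv, rfl⟩
  exact schurBound_transferValue g hpq hC (h K v hv)

/-- A pair of symbols. In the pairs coming from transference the first is the symbol of a Schur
multiplier, the second the product of the squared cosines. -/
abbrev SymbolPair (ι : Type*) := (ι → ι → ℝ) × (ι → ι → ℝ)

/-- Closed convex hull of the symbols of transferred martingale transforms, paired with the squared
means of the phases. -/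
def transferHull (ι : Type*) : Set (SymbolPair ι) :=
  closedConvexHull ℝ {x | ∃ (K : ℕ) (v : ℕ → ℝ) (g : ℕ → ι → ℝ), (∀ i, |v i| ≤ 1) ∧
    x = (fun i k => transferValue K v fun j => g j i - g j k,
      fun i k => cosProd K (fun j => g j i - g j k) ^ 2)}

/-- The effect on a pair of symbols of one more toss, performed first. -/
def prepend {ι : Type*} (n x : SymbolPair ι) : SymbolPair ι :=
  (x.1 + n.1 * x.2, (1 - n.2) * x.2)

/-- The pair of symbols by which a toss with coefficient `v` and angles `g` acts in `prepend`. -/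
noncomputable def sinPair {ι : Type*} (v : ℝ) (g : ι → ℝ) : SymbolPair ι :=
  (fun i k => v * Real.sin (g i - g k) ^ 2, fun i k => Real.sin (g i - g k) ^ 2)

section Cone

variable {ι V : Type*} {E : ι → V} {n n' x : SymbolPair ι}

lemma fst_mem_transferMultipliers (hx : x ∈ transferHull ι) : x.1 ∈ transferMultipliers ι := by
  suffices transferHull ι ⊆ Prod.fst ⁻¹' transferMultipliers ι from this hx
  refine closedConvexHull_min ?_
    (convex_closedConvexHull.linear_preimage (LinearMap.fst ℝ (ι → ι → ℝ) (ι → ι → ℝ)))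
    (isClosed_closedConvexHull.preimage continuous_fst)
  rintro x ⟨K, v, g, hv, rfl⟩
  exact subset_closedConvexHull ⟨K, v, g, hv, rfl⟩

lemma zero_one_mem_transferHull : ((0, 1) : SymbolPair ι) ∈ transferHull ι := by
  refine subset_closedConvexHull ⟨0, 0, 0, fun i => by simp, Prod.ext rfl ?_⟩
  funext i k
  simp [cosProd]

lemma prepend_zero (x : SymbolPair ι) : prepend 0 x = x := by simp [prepend]

lemma prepend_combination_right (n x y : SymbolPair ι) (a b : ℝ) :
    prepend n (a • x + b • y) = a • prepend n x + b • prepend n y := by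
  refine Prod.ext ?_ ?_ <;> funext i k <;>
    simp only [prepend, Prod.fst_add, Prod.snd_add, Prod.smul_fst, Prod.smul_snd, Pi.add_apply,
      Pi.sub_apply, Pi.mul_apply, Pi.smul_apply, Pi.one_apply, smul_eq_mul] <;> ring

lemma prepend_combination_left (n n' x : SymbolPair ι) {a b : ℝ} (hab : a + b = 1) :
    prepend (a • n + b • n') x = a • prepend n x + b • prepend n' x := by
  obtain rfl : b = 1 - a := by linarith
  refine Prod.ext ?_ ?_ <;> funext i k <;>
    simp only [prepend, Prod.fst_add, Prod.snd_add, Prod.smul_fst, Prod.smul_snd, Pi.add_apply,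
      Pi.sub_apply, Pi.mul_apply, Pi.smul_apply, Pi.one_apply, smul_eq_mul] <;> ring

lemma prepend_iterate (n : SymbolPair ι) (K : ℕ) :
    (prepend n)^[K] (0, 1) = (n.1 * ∑ j ∈ range K, (1 - n.2) ^ j, (1 - n.2) ^ K) := by
  induction K with
  | zero => simp
  | succ K ih => rw [Function.iterate_succ_apply', ih, prepend, sum_range_succ, mul_add, pow_succ']

lemma prepend_sinPair_mem_transferHull {v : ℝ} (hv : |v| ≤ 1) (g : ι → ℝ)
    (hx : x ∈ transferHull ι) : prepend (sinPair v g) x ∈ transferHull ι := by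
  suffices transferHull ι ⊆ prepend (sinPair v g) ⁻¹' transferHull ι from this hx
  refine closedConvexHull_min ?_ ?_ (isClosed_closedConvexHull.preimage ?_)
  · rintro x ⟨K, v', g', hv', rfl⟩
    refine subset_closedConvexHull ⟨K + 1, fun k => k.casesOn v v', fun k => k.casesOn g g', ?_,
      Prod.ext (funext₂ fun i k => add_comm _ _) (funext₂ fun i k => ?_)⟩
    · rintro (_ | i)
      exacts [hv, hv' i]
    · refine Eq.trans ?_ (congrArg (· ^ 2) (cosProd_succ K _)).symm
      rw [mul_pow, Real.cos_sq']
      rfl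
  · intro x hx y hy a b ha hb hab
    rw [Set.mem_preimage, prepend_combination_right]
    exact convex_closedConvexHull hx hy ha hb hab
  · unfold prepend
    fun_prop

/-- An infinitesimal generator: prepending a small multiple of `n` stays within the transferred
symbols. The map `E` records at which positions `n` has to vanish. -/
structure IsGenerator (E : ι → V) (n : SymbolPair ι) : Prop where
  abs_fst_le : ∀ i k, |n.1 i k| ≤ n.2 i k
  snd_eq_zero : ∀ i k, E i = E k → n.2 i k = 0
  exists_prepend_mem : ∃ ε > 0, ∀ t : ℝ, 0 ≤ t → t ≤ ε → ∀ x ∈ transferHull ι,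
    prepend (t • n) x ∈ transferHull ι

lemma isGenerator_sinPair {v : ℝ} (hv : |v| ≤ 1) {g : ι → ℝ} (hg : ∀ i k, E i = E k → g i = g k) :
    IsGenerator E (sinPair v g) where
  abs_fst_le i k := by
    rw [sinPair, abs_mul, abs_of_nonneg (sq_nonneg (Real.sin _))]
    exact mul_le_of_le_one_left (sq_nonneg _) hv
  snd_eq_zero i k h := by simp [sinPair, hg i k h]
  exists_prepend_mem := by
    refine ⟨1, one_pos, fun t ht ht1 x hx => ?_⟩
    have hcomb : t • sinPair v g = (1 - t) • (0 : SymbolPair ι) + t • sinPair v g := by simp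
    rw [hcomb, prepend_combination_left _ _ _ (sub_add_cancel 1 t), prepend_zero]
    exact convex_closedConvexHull hx (prepend_sinPair_mem_transferHull hv g hx)
      (sub_nonneg.mpr ht1) ht (sub_add_cancel 1 t)

lemma isGenerator_zero : IsGenerator E (0 : SymbolPair ι) where
  abs_fst_le i k := by simp
  snd_eq_zero i k _ := rfl
  exists_prepend_mem := ⟨1, one_pos, fun t _ _ x hx => by rwa [smul_zero, prepend_zero]⟩

lemma IsGenerator.add (h : IsGenerator E n) (h' : IsGenerator E n') : IsGenerator E (n + n') where
  abs_fst_le i k := (abs_add_le _ _).trans (add_le_add (h.abs_fst_le i k) (h'.abs_fst_le i k))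
  snd_eq_zero i k hE := by
    simp [h.snd_eq_zero i k hE, h'.snd_eq_zero i k hE]
  exists_prepend_mem := by
    obtain ⟨ε, hε, hn⟩ := h.exists_prepend_mem
    obtain ⟨δ, hδ, hn'⟩ := h'.exists_prepend_mem
    refine ⟨min ε δ / 2, by positivity, fun t ht htle x hx => ?_⟩
    have hmid : t • (n + n') = (1 / 2 : ℝ) • (2 * t) • n + (1 / 2 : ℝ) • (2 * t) • n' := by module
    rw [hmid, prepend_combination_left _ _ _ (by norm_num)]
    have hε' := min_le_left ε δ
    have hδ' := min_le_right ε δ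
    exact convex_closedConvexHull (hn _ (by positivity) (by linarith) x hx)
      (hn' _ (by positivity) (by linarith) x hx) (by norm_num) (by norm_num) (by norm_num)

lemma IsGenerator.smul (h : IsGenerator E n) {c : ℝ} (hc : 0 ≤ c) : IsGenerator E (c • n) where
  abs_fst_le i k := by
    simp only [Prod.smul_fst, Prod.smul_snd, Pi.smul_apply, smul_eq_mul, abs_mul, abs_of_nonneg hc]
    exact mul_le_mul_of_nonneg_left (h.abs_fst_le i k) hc
  snd_eq_zero i k hE := by simp [h.snd_eq_zero i k hE]
  exists_prepend_mem := by
    obtain ⟨ε, hε, hn⟩ := h.exists_prepend_mem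
    refine ⟨ε / (c + 1), by positivity, fun t ht htle x hx => ?_⟩
    rw [le_div_iff₀ (by positivity)] at htle
    rw [smul_smul]
    exact hn _ (by positivity) (by linarith) x hx

/-- The convex cone of infinitesimal generators. -/
def generatorCone (E : ι → V) : PointedCone ℝ (SymbolPair ι) where
  carrier := {n | IsGenerator E n}
  zero_mem' := isGenerator_zero
  add_mem' := IsGenerator.add
  smul_mem' c _ hn := hn.smul c.2

/-- The closed convex cone generated by the infinitesimal generators. -/
noncomputable def closedGeneratorCone (E : ι → V) : ProperCone ℝ (SymbolPair ι) :=
  Submodule.closure (generatorCone E)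

lemma mem_closedGeneratorCone_iff :
    n ∈ closedGeneratorCone E ↔ n ∈ closure {n : SymbolPair ι | IsGenerator E n} := Iff.rfl

lemma mem_transferMultipliers_of_tendsto {m : ℕ → ι → ι → ℝ} {m' : ι → ι → ℝ}
    (hm : ∀ K, m K ∈ transferMultipliers ι)
    (hlim : ∀ i k, Filter.Tendsto (fun K => m K i k) Filter.atTop (nhds (m' i k))) :
    m' ∈ transferMultipliers ι :=
  isClosed_closedConvexHull.mem_of_tendsto
    (tendsto_pi_nhds.mpr fun i => tendsto_pi_nhds.mpr (hlim i)) (Filter.Eventually.of_forall hm)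

lemma IsGenerator.exists_small_multiple [Finite ι] (h : IsGenerator E n) :
    ∃ t : ℝ, 0 < t ∧ (∀ i k, t * n.2 i k ≤ 1) ∧
      ∀ x ∈ transferHull ι, prepend (t • n) x ∈ transferHull ι := by
  obtain ⟨ε, hε, hn⟩ := h.exists_prepend_mem
  obtain ⟨M, hM⟩ := (Set.finite_range fun ik : ι × ι => n.2 ik.1 ik.2).bddAbove
  have ht : 0 < min ε (1 / (|M| + 1)) := by positivity
  refine ⟨_, ht, fun i k => ?_, hn _ ht.le (min_le_left _ _)⟩
  calc min ε (1 / (|M| + 1)) * n.2 i k ≤ 1 / (|M| + 1) * (|M| + 1) := by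
        gcongr
        · exact (abs_nonneg _).trans (h.abs_fst_le i k)
        · exact min_le_right _ _
        · exact (hM ⟨(i, k), rfl⟩).trans
            ((le_abs_self M).trans (le_add_of_nonneg_right zero_le_one))
    _ = 1 := one_div_mul_cancel (by positivity)

/-- Iterating a generator infinitely often sums the geometric series
`t n.1 ∑ (1 - t n.2) ^ j = n.1 / n.2`. -/
lemma IsGenerator.div_mem_transferMultipliers [Finite ι] (h : IsGenerator E n) :
    (fun i k => n.1 i k / n.2 i k) ∈ transferMultipliers ι := by
  obtain ⟨t, ht, ht1, hmem⟩ := h.exists_small_multiple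
  have hiterate (K : ℕ) : (prepend (t • n))^[K] (0, 1) ∈ transferHull ι :=
    Function.Iterate.rec (· ∈ transferHull ι) zero_one_mem_transferHull (fun x hx => hmem x hx) K
  refine mem_transferMultipliers_of_tendsto (fun K => fst_mem_transferMultipliers (hiterate K))
    fun i k => ?_
  have hpartial (K : ℕ) : ((prepend (t • n))^[K] (0, 1)).1 i k
      = t * n.1 i k * ∑ j ∈ range K, (1 - t * n.2 i k) ^ j := by
    simp [prepend_iterate, Finset.sum_apply, mul_assoc]
  simp only [hpartial]
  rcases ((abs_nonneg _).trans (h.abs_fst_le i k)).eq_or_lt with hzero | hpos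
  · have hfst : n.1 i k = 0 := abs_nonpos_iff.mp ((h.abs_fst_le i k).trans hzero.ge)
    simp [hfst]
  · have htpos : 0 < t * n.2 i k := mul_pos ht hpos
    have hgeom := hasSum_geometric_of_abs_lt_one (r := 1 - t * n.2 i k)
      (abs_lt.mpr ⟨by linarith [ht1 i k], by linarith⟩)
    have hvalue : n.1 i k / n.2 i k = t * n.1 i k * (1 - (1 - t * n.2 i k))⁻¹ := by
      rw [sub_sub_cancel, ← div_eq_mul_inv, mul_div_mul_left _ _ ht.ne']
    rw [hvalue]
    exact hgeom.tendsto_sum_nat.const_mul _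

lemma div_mem_transferMultipliers_of_mem_closedGeneratorCone [Finite ι]
    (hn : n ∈ closedGeneratorCone E) (hne : ∀ i k, E i ≠ E k → n.2 i k ≠ 0) :
    (fun i k => n.1 i k / n.2 i k) ∈ transferMultipliers ι := by
  have := Fintype.ofFinite ι
  obtain ⟨x, hx, hlim⟩ := mem_closure_iff_seq_limit.mp (mem_closedGeneratorCone_iff.mp hn)
  refine mem_transferMultipliers_of_tendsto (fun K => (hx K).div_mem_transferMultipliers)
    fun i k => ?_
  have hfst : Filter.Tendsto (fun K => (x K).1 i k) Filter.atTop (nhds (n.1 i k)) :=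
    (hlim.fst_nhds.apply_nhds i).apply_nhds k
  have hsnd : Filter.Tendsto (fun K => (x K).2 i k) Filter.atTop (nhds (n.2 i k)) :=
    (hlim.snd_nhds.apply_nhds i).apply_nhds k
  by_cases hE : E i = E k
  · have hzero (K : ℕ) : (x K).2 i k = 0 := (hx K).snd_eq_zero i k hE
    simp only [hzero] at hsnd
    simp [hzero, tendsto_nhds_unique hsnd tendsto_const_nhds]
  · exact hfst.div hsnd (hne i k hE)

end Cone

lemma integral_mem_properCone {F α : Type*} [NormedAddCommGroup F] [NormedSpace ℝ F]
    [CompleteSpace F] [MeasurableSpace α] {μ : MeasureTheory.Measure α} (S : ProperCone ℝ F)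
    {f : α → F} (hf : ∀ᵐ a ∂μ, f a ∈ S) : ∫ a, f a ∂μ ∈ S := by
  by_cases hint : MeasureTheory.Integrable f μ
  · by_contra hnot
    obtain ⟨φ, hφ, hneg⟩ := S.hyperplane_separation_point hnot
    rw [← φ.integral_comp_comm hint] at hneg
    exact hneg.not_ge (MeasureTheory.integral_nonneg_of_ae (hf.mono fun a ha => hφ _ ha))
  · rw [MeasureTheory.integral_undef hint]
    exact zero_mem S

lemma integral_symbolPair {ι α : Type*} [Fintype ι] [MeasurableSpace α]
    {μ : MeasureTheory.Measure α} {f g : α → ι → ι → ℝ}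
    (hf : ∀ i k, MeasureTheory.Integrable (fun a => f a i k) μ)
    (hg : ∀ i k, MeasureTheory.Integrable (fun a => g a i k) μ) :
    ∫ a, ((f a, g a) : SymbolPair ι) ∂μ
      = (fun i k => ∫ a, f a i k ∂μ, fun i k => ∫ a, g a i k ∂μ) := by
  have hintegrable {h : α → ι → ι → ℝ} (hh : ∀ i k, MeasureTheory.Integrable (fun a => h a i k) μ) :
      MeasureTheory.Integrable h μ := .of_eval fun i => .of_eval fun k => hh i k
  have heval {h : α → ι → ι → ℝ} (hh : ∀ i k, MeasureTheory.Integrable (fun a => h a i k) μ) :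
      ∫ a, h a ∂μ = fun i k => ∫ a, h a i k ∂μ := by
    funext i k
    rw [MeasureTheory.eval_integral fun i => (hintegrable hh).eval i,
      MeasureTheory.eval_integral fun k => hh i k]
  rw [integral_pair (hintegrable hf) (hintegrable hg), heval hf, heval hg]

/-! ### Fourier representation -/

open MeasureTheory FourierTransform
open scoped SchwartzMap

lemma integrableOn_inv_sq_mul {φ : ℝ → ℝ} {C : ℝ} (hmeas : Measurable φ)
    (hsq : ∀ r, 0 < r → |φ r| ≤ C * r ^ 2) (hbdd : ∀ r, 0 < r → |φ r| ≤ C) :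
    IntegrableOn (fun r => (r ^ 2)⁻¹ * φ r) (Set.Ioi 0) := by
  have hm : Measurable fun r => (r ^ 2)⁻¹ * φ r := (measurable_id.pow_const 2).inv.mul hmeas
  have hnorm (r : ℝ) : ‖(r ^ 2)⁻¹ * φ r‖ = (r ^ 2)⁻¹ * |φ r| := by
    rw [Real.norm_eq_abs, abs_mul, abs_of_nonneg (by positivity)]
  rw [← Set.Ioc_union_Ioi_eq_Ioi (zero_le_one : (0 : ℝ) ≤ 1)]
  refine IntegrableOn.union ?_ ?_
  · refine Measure.integrableOn_of_bounded (M := C) (by simp) hm.aestronglyMeasurable ?_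
    filter_upwards [ae_restrict_mem measurableSet_Ioc] with r hr
    rw [hnorm, inv_mul_le_iff₀ (pow_pos hr.1 2), mul_comm]
    exact hsq r hr.1
  · have hdecay : IntegrableOn (fun r : ℝ => C * r ^ (-2 : ℝ)) (Set.Ioi 1) :=
      (integrableOn_Ioi_rpow_of_lt (by norm_num) one_pos).const_mul C
    refine hdecay.mono' hm.aestronglyMeasurable ?_
    filter_upwards [ae_restrict_mem measurableSet_Ioi] with r hr
    have hr0 : 0 < r := one_pos.trans hr
    rw [hnorm, Real.rpow_neg hr0.le, Real.rpow_two, mul_comm]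
    gcongr
    exact hbdd r hr0

lemma integral_Ioi_inv_sq_mul_comp_mul (φ : ℝ → ℝ) {b : ℝ} (hb : 0 < b) :
    ∫ r in Set.Ioi 0, (r ^ 2)⁻¹ * φ (r * b) = b * ∫ r in Set.Ioi 0, (r ^ 2)⁻¹ * φ r := by
  have hscale (r : ℝ) : (r ^ 2)⁻¹ * φ (r * b) = b ^ 2 * (((r * b) ^ 2)⁻¹ * φ (r * b)) := by
    rw [mul_pow, mul_inv]
    field_simp
  simp only [hscale]
  rw [integral_const_mul, integral_comp_mul_right_Ioi (fun r => (r ^ 2)⁻¹ * φ r) 0 hb, zero_mul,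
    smul_eq_mul]
  field_simp

section FiniteDimensional

variable {V : Type*} [NormedAddCommGroup V] [InnerProductSpace ℝ V]

/-- A rotation invariant weight with enough decay for its second moment to be finite. -/
noncomputable def decayWeight (z : V) : ℝ := ((1 + ‖z‖) ^ (Module.finrank ℝ V + 3))⁻¹

lemma decayWeight_pos (z : V) : 0 < decayWeight z := by
  unfold decayWeight
  positivity

lemma continuous_decayWeight : Continuous (decayWeight : V → ℝ) := by
  unfold decayWeight
  exact Continuous.inv₀ (by fun_prop) fun z => by positivity

lemma decayWeight_map (R : V ≃ₗᵢ[ℝ] V) (z : V) : decayWeight (R z) = decayWeight z := by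
  rw [decayWeight, R.norm_map, decayWeight]

lemma exists_norm_le_mul_decayWeight (H : 𝓢(V, ℂ)) :
    ∃ C, 0 < C ∧ ∀ z, ‖H z‖ ≤ C * decayWeight z := by
  have hdecay (z : V) := SchwartzMap.one_add_le_sup_seminorm_apply (𝕜 := ℝ)
    (m := (Module.finrank ℝ V + 3, 0)) le_rfl le_rfl H z
  simp only [norm_iteratedFDeriv_zero] at hdecay
  obtain ⟨C, hC⟩ : ∃ C, ∀ z, (1 + ‖z‖) ^ (Module.finrank ℝ V + 3) * ‖H z‖ ≤ C := ⟨_, hdecay⟩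
  have hC0 : 0 ≤ C := le_trans (by positivity) (hC 0)
  refine ⟨C + 1, by positivity, fun z => ?_⟩
  rw [decayWeight, ← div_eq_mul_inv, le_div_iff₀ (by positivity), mul_comm]
  exact (hC z).trans (le_add_of_nonneg_right zero_le_one)

variable [FiniteDimensional ℝ V] [MeasurableSpace V] [BorelSpace V]

lemma integrable_inv_one_add_norm_pow {k : ℕ} (hk : Module.finrank ℝ V < k) :
    Integrable fun z : V => ((1 + ‖z‖) ^ k)⁻¹ := by
  have hrpow := integrable_one_add_norm (E := V) (μ := volume) (r := k) (by exact_mod_cast hk)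
  refine hrpow.congr (.of_forall fun z => ?_)
  simp only [Real.rpow_neg (show 0 ≤ 1 + ‖z‖ by positivity), Real.rpow_natCast]

lemma integrable_decayWeight : Integrable (decayWeight : V → ℝ) :=
  integrable_inv_one_add_norm_pow (by lia)

lemma integrable_decayWeight_mul_norm_sq : Integrable fun z : V => decayWeight z * ‖z‖ ^ 2 := by
  refine (integrable_inv_one_add_norm_pow (V := V) (Nat.lt_succ_self _)).mono'
    (continuous_decayWeight.mul (by fun_prop)).aestronglyMeasurable (.of_forall fun z => ?_)
  rw [Real.norm_of_nonneg (mul_nonneg (decayWeight_pos z).le (by positivity)), decayWeight,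
    inv_mul_le_iff₀ (by positivity), ← div_eq_mul_inv, le_div_iff₀ (by positivity),
    show Module.finrank ℝ V + 3 = 2 + (Module.finrank ℝ V + 1) by ring, pow_add]
  gcongr
  exact le_add_of_nonneg_left zero_le_one

lemma schwartz_eq_integral_sin_sq {G : 𝓢(V, ℂ)} (heven : ∀ a, G (-a) = G a) (hzero : G 0 = 0)
    (a : V) : G a = ∫ z, ((-2 * Real.sin (Real.pi * ⟪a, z⟫_ℝ) ^ 2 : ℝ) : ℂ) * 𝓕 G z := by
  have hint (b : V) :
      Integrable fun z => Complex.exp ((2 * Real.pi * ⟪z, b⟫_ℝ : ℝ) * Complex.I) * 𝓕 G z :=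
    (𝓕 G).integrable.bdd_mul (by fun_prop : Continuous _).aestronglyMeasurable
      (.of_forall fun z => (Complex.norm_exp_ofReal_mul_I _).le)
  have hinv (b : V) :
      G b = ∫ z, Complex.exp ((2 * Real.pi * ⟪z, b⟫_ℝ : ℝ) * Complex.I) * 𝓕 G z := by
    conv_lhs => rw [← FourierTransform.fourierInv_fourier_eq (F := 𝓢(V, ℂ)) G]
    rw [SchwartzMap.fourierInv_coe, Real.fourierInv_eq']
    rfl
  have hsum : G a = (1 / 2 : ℂ) * (G a + G (-a) - (G 0 + G 0)) := by
    rw [heven, hzero]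
    ring
  rw [hsum, hinv a, hinv (-a), hinv 0, ← integral_add' (hint _) (hint _),
    ← integral_add' (hint _) (hint _),
    ← integral_sub' ((hint _).add (hint _)) ((hint _).add (hint _)),
    ← integral_const_mul]
  congr 1 with z
  rw [real_inner_comm z a]
  have hcos : Complex.exp ((2 * Real.pi * ⟪z, a⟫_ℝ : ℝ) * Complex.I)
      + Complex.exp ((2 * Real.pi * ⟪z, -a⟫_ℝ : ℝ) * Complex.I)
      = 2 * Real.cos (2 * (Real.pi * ⟪z, a⟫_ℝ)) := by
    rw [inner_neg_right, Complex.ofReal_cos, Complex.two_cos]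
    push_cast
    ring_nf
  rw [Real.cos_two_mul, Real.cos_sq'] at hcos
  simp only [inner_zero_right, mul_zero, Complex.ofReal_zero, zero_mul, Complex.exp_zero,
    Pi.add_apply, Pi.sub_apply]
  push_cast at hcos ⊢
  linear_combination (1 / 2 * 𝓕 G z) * hcos

/-- The integral of `sin² (π ⟨a, z⟩)` over `z` with the density `u`. -/
noncomputable def sinSqIntegral (u : V → ℝ) (a : V) : ℝ :=
  ∫ z, u z * Real.sin (Real.pi * ⟪a, z⟫_ℝ) ^ 2

lemma exists_eq_mul_sinSqIntegral {g : 𝓢(V, ℝ)} (heven : ∀ a, g (-a) = g a) (hzero : g 0 = 0) :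
    ∃ (C : ℝ) (u : V → ℝ), 0 < C ∧ Continuous u ∧ (∀ z, |u z| ≤ decayWeight z) ∧
      ∀ a, g a = C * sinSqIntegral u a := by
  set G : 𝓢(V, ℂ) := g.postcompCLM Complex.ofRealCLM
  obtain ⟨C, hC, hdecay⟩ := exists_norm_le_mul_decayWeight (𝓕 G)
  refine ⟨2 * C, fun z => -C⁻¹ * (𝓕 G z).re, by positivity, ?_, fun z => ?_, fun a => ?_⟩
  · exact continuous_const.mul (Complex.continuous_re.comp (𝓕 G).continuous)
  · rw [abs_mul, abs_neg, abs_of_pos (inv_pos.mpr hC), inv_mul_le_iff₀ hC]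
    exact (Complex.abs_re_le_norm _).trans (hdecay z)
  · have hG := schwartz_eq_integral_sin_sq (G := G)
      (fun a => congrArg Complex.ofReal (heven a)) (congrArg Complex.ofReal hzero) a
    have hint : Integrable fun z => ((-2 * Real.sin (Real.pi * ⟪a, z⟫_ℝ) ^ 2 : ℝ) : ℂ) * 𝓕 G z := by
      refine (𝓕 G).integrable.bdd_mul (c := 2) (by fun_prop : Continuous _).aestronglyMeasurable
        (.of_forall fun z => ?_)
      rw [Complex.norm_real, Real.norm_eq_abs, abs_mul, abs_neg, abs_two,
        abs_of_nonneg (sq_nonneg _)]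
      exact mul_le_of_le_one_right zero_le_two (Real.sin_sq_le_one _)
    calc g a = (G a).re := rfl
      _ = ∫ z, (((-2 * Real.sin (Real.pi * ⟪a, z⟫_ℝ) ^ 2 : ℝ) : ℂ) * 𝓕 G z).re := by
          rw [hG]
          exact (integral_re hint).symm
      _ = _ := by
          rw [sinSqIntegral, ← integral_const_mul]
          congr 1 with z
          rw [Complex.re_ofReal_mul]
          field_simp

lemma integrable_mul_sin_sq {u : V → ℝ} (hu : Integrable u) (a : V) :
    Integrable fun z => u z * Real.sin (Real.pi * ⟪a, z⟫_ℝ) ^ 2 :=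
  hu.mul_bdd (c := 1) (by fun_prop : Continuous _).aestronglyMeasurable <| .of_forall fun z => by
    rw [Real.norm_of_nonneg (sq_nonneg _)]
    exact Real.sin_sq_le_one _

lemma sinSqIntegral_mono {u w : V → ℝ} (hu : Integrable u) (hw : Integrable w)
    (h : ∀ z, u z ≤ w z) (a : V) : sinSqIntegral u a ≤ sinSqIntegral w a :=
  integral_mono (integrable_mul_sin_sq hu a) (integrable_mul_sin_sq hw a) fun z =>
    mul_le_mul_of_nonneg_right (h z) (sq_nonneg _)

lemma abs_sinSqIntegral_le {u w : V → ℝ} (hu : Integrable u) (hw : Integrable w)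
    (h : ∀ z, |u z| ≤ w z) (a : V) : |sinSqIntegral u a| ≤ sinSqIntegral w a := by
  refine abs_le.mpr ⟨?_, sinSqIntegral_mono hu hw (fun z => (abs_le.mp (h z)).2) a⟩
  calc -sinSqIntegral w a = sinSqIntegral (fun z => -w z) a := by
        simp only [sinSqIntegral, neg_mul, integral_neg]
    _ ≤ sinSqIntegral u a := sinSqIntegral_mono hw.neg hu (fun z => (abs_le.mp (h z)).1) a

lemma continuous_sinSqIntegral {u : V → ℝ} (hu : Integrable u) :
    Continuous (sinSqIntegral u) := by
  refine continuous_of_dominated (bound := fun z => |u z|)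
    (fun a => (integrable_mul_sin_sq hu a).aestronglyMeasurable)
    (fun a => .of_forall fun z => ?_) hu.abs (.of_forall fun z => by fun_prop)
  rw [norm_mul, Real.norm_of_nonneg (sq_nonneg (Real.sin _)), Real.norm_eq_abs]
  exact mul_le_of_le_one_right (abs_nonneg _) (Real.sin_sq_le_one _)

lemma sinSqIntegral_zero (u : V → ℝ) : sinSqIntegral u 0 = 0 := by simp [sinSqIntegral]

lemma sinSqIntegral_nonneg {w : V → ℝ} (hw : ∀ z, 0 ≤ w z) (a : V) : 0 ≤ sinSqIntegral w a :=
  integral_nonneg fun z => mul_nonneg (hw z) (sq_nonneg _)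

lemma sinSqIntegral_le_integral {w : V → ℝ} (hw : Integrable w) (h0 : ∀ z, 0 ≤ w z) (a : V) :
    sinSqIntegral w a ≤ ∫ z, w z :=
  integral_mono (integrable_mul_sin_sq hw a) hw fun z =>
    mul_le_of_le_one_right (h0 z) (Real.sin_sq_le_one _)

lemma sinSqIntegral_le_norm_sq {w : V → ℝ} (hw : Integrable w) (h0 : ∀ z, 0 ≤ w z)
    (h2 : Integrable fun z => w z * ‖z‖ ^ 2) (a : V) :
    sinSqIntegral w a ≤ (Real.pi ^ 2 * ∫ z, w z * ‖z‖ ^ 2) * ‖a‖ ^ 2 := by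
  rw [← integral_const_mul, ← integral_mul_const]
  refine integral_mono (integrable_mul_sin_sq hw a) ((h2.const_mul _).mul_const _) fun z => ?_
  have hsin : |Real.sin (Real.pi * ⟪a, z⟫_ℝ)| ≤ Real.pi * (‖a‖ * ‖z‖) := by
    refine Real.abs_sin_le_abs.trans ?_
    rw [abs_mul, abs_of_pos Real.pi_pos]
    exact mul_le_mul_of_nonneg_left (abs_real_inner_le_norm a z) Real.pi_pos.le
  calc w z * Real.sin (Real.pi * ⟪a, z⟫_ℝ) ^ 2 ≤ w z * (Real.pi * (‖a‖ * ‖z‖)) ^ 2 :=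
        mul_le_mul_of_nonneg_left (sq_le_sq' (abs_le.mp hsin).1 (abs_le.mp hsin).2) (h0 z)
    _ = Real.pi ^ 2 * (w z * ‖z‖ ^ 2) * ‖a‖ ^ 2 := by ring

lemma sinSqIntegral_decayWeight_eq_of_norm_eq {a b : V} (h : ‖a‖ = ‖b‖) :
    sinSqIntegral decayWeight a = sinSqIntegral decayWeight b := by
  let R : V ≃ₗᵢ[ℝ] V := (Submodule.span ℝ {a - b})ᗮ.reflection
  have hR : R a = b := Submodule.reflection_sub h
  rw [sinSqIntegral, sinSqIntegral,
    ← R.measurePreserving.integral_comp R.toHomeomorph.measurableEmbedding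
      fun z => decayWeight z * Real.sin (Real.pi * ⟪b, z⟫_ℝ) ^ 2]
  congr 1 with z
  rw [decayWeight_map, ← hR, R.inner_map_map]

lemma sinSqIntegral_decayWeight_pos {a : V} (ha : a ≠ 0) : 0 < sinSqIntegral decayWeight a := by
  rw [sinSqIntegral, integral_pos_iff_support_of_nonneg
    (fun z => mul_nonneg (decayWeight_pos z).le (sq_nonneg _))
    (integrable_mul_sin_sq integrable_decayWeight a)]
  have hcont : Continuous fun z : V => decayWeight z * Real.sin (Real.pi * ⟪a, z⟫_ℝ) ^ 2 :=
    continuous_decayWeight.mul (by fun_prop)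
  refine hcont.isOpen_support.measure_pos _ ⟨(1 / (2 * ‖a‖ ^ 2)) • a, ?_⟩
  have hangle : Real.pi * ⟪a, (1 / (2 * ‖a‖ ^ 2)) • a⟫_ℝ = Real.pi / 2 := by
    rw [inner_smul_right, real_inner_self_eq_norm_sq]
    have hnorm : ‖a‖ ≠ 0 := norm_ne_zero_iff.mpr ha
    field_simp
  rw [Function.mem_support, hangle, Real.sin_pi_div_two, one_pow, mul_one]
  exact (decayWeight_pos _).ne'

lemma integrableOn_inv_sq_mul_sinSqIntegral {u w : V → ℝ} (hu : Integrable u) (hw : Integrable w)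
    (h : ∀ z, |u z| ≤ w z) (h2 : Integrable fun z => w z * ‖z‖ ^ 2) (a : V) :
    IntegrableOn (fun r : ℝ => (r ^ 2)⁻¹ * sinSqIntegral u (r • a)) (Set.Ioi 0) := by
  have hcont : Continuous fun r : ℝ => sinSqIntegral u (r • a) :=
    (continuous_sinSqIntegral hu).comp (by fun_prop)
  have h0 (z : V) : 0 ≤ w z := (abs_nonneg _).trans (h z)
  refine integrableOn_inv_sq_mul hcont.measurable
    (C := max ((Real.pi ^ 2 * ∫ z, w z * ‖z‖ ^ 2) * ‖a‖ ^ 2) (∫ z, w z))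
    (fun r _ => (abs_sinSqIntegral_le hu hw h _).trans ?_)
    (fun r _ => (abs_sinSqIntegral_le hu hw h _).trans ?_)
  · refine (sinSqIntegral_le_norm_sq hw h0 h2 _).trans ?_
    rw [norm_smul, mul_pow, Real.norm_eq_abs, sq_abs, mul_comm (r ^ 2), ← mul_assoc]
    exact mul_le_mul_of_nonneg_right (le_max_left _ _) (sq_nonneg r)
  · exact (sinSqIntegral_le_integral hw h0 _).trans (le_max_right _ _)

lemma exists_integral_inv_sq_mul_sinSqIntegral [Nontrivial V] :
    ∃ c : ℝ, 0 < c ∧ ∀ a : V,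
      ∫ r in Set.Ioi (0 : ℝ), (r ^ 2)⁻¹ * sinSqIntegral decayWeight (r • a) = c * ‖a‖ := by
  obtain ⟨e, he⟩ := exists_norm_eq V (zero_le_one (α := ℝ))
  have he0 : e ≠ 0 := norm_ne_zero_iff.mp (he.trans_ne one_ne_zero)
  have hnonneg (z : V) : 0 ≤ decayWeight z := (decayWeight_pos z).le
  refine ⟨∫ r in Set.Ioi (0 : ℝ), (r ^ 2)⁻¹ * sinSqIntegral decayWeight (r • e), ?_, fun a => ?_⟩
  · rw [setIntegral_pos_iff_support_of_nonneg_ae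
      (.of_forall fun r => mul_nonneg (by positivity) (sinSqIntegral_nonneg hnonneg _))
      (integrableOn_inv_sq_mul_sinSqIntegral integrable_decayWeight integrable_decayWeight
        (fun z => (abs_of_nonneg (hnonneg z)).le) integrable_decayWeight_mul_norm_sq e)]
    have hvol : 0 < volume (Set.Ioi (0 : ℝ)) := by simp
    refine hvol.trans_le (measure_mono fun r hr => ?_)
    have hr0 : 0 < r := hr
    have hpos := sinSqIntegral_decayWeight_pos (smul_ne_zero hr0.ne' he0)
    exact ⟨(mul_pos (by positivity) hpos).ne', hr⟩
  · rcases eq_or_ne a 0 with rfl | ha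
    · simp [sinSqIntegral_zero]
    have hrot (r : ℝ) :
        sinSqIntegral decayWeight (r • a) = sinSqIntegral decayWeight ((r * ‖a‖) • e) :=
      sinSqIntegral_decayWeight_eq_of_norm_eq (by simp [norm_smul, he])
    simp only [hrot]
    rw [integral_Ioi_inv_sq_mul_comp_mul (fun s => sinSqIntegral decayWeight (s • e))
      (norm_pos_iff.mpr ha), mul_comm]

lemma sinSqIntegral_pair_mem_closedGeneratorCone {ι W : Type*} [Finite ι] {E : ι → W} {A : ι → V}
    (hA : ∀ i k, E i = E k → A i = A k) {u w : V → ℝ} (hu : Integrable u) (hw : Integrable w)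
    (h : ∀ z, |u z| ≤ w z) :
    (fun i k => sinSqIntegral u (A i - A k), fun i k => sinSqIntegral w (A i - A k))
      ∈ closedGeneratorCone E := by
  cases nonempty_fintype ι
  have hpoint (z : V) : (fun i k => u z * Real.sin (Real.pi * ⟪A i - A k, z⟫_ℝ) ^ 2,
      fun i k => w z * Real.sin (Real.pi * ⟪A i - A k, z⟫_ℝ) ^ 2)
      = w z • sinPair (u z / w z) fun i => Real.pi * ⟪A i, z⟫_ℝ := by
    have hcancel : u z = w z * (u z / w z) := by
      rcases eq_or_ne (w z) 0 with hz | hz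
      · rw [abs_nonpos_iff.mp ((h z).trans hz.le), hz, zero_mul]
      · rw [mul_div_cancel₀ _ hz]
    refine Prod.ext ?_ ?_ <;> funext i k <;>
      simp only [sinPair, Prod.smul_fst, Prod.smul_snd, Pi.smul_apply, smul_eq_mul, ← mul_sub,
        ← inner_sub_left]
    rw [← mul_assoc, ← hcancel]
  have hmem := integral_mem_properCone (μ := volume) (closedGeneratorCone E)
    (f := fun z => (fun i k => u z * Real.sin (Real.pi * ⟪A i - A k, z⟫_ℝ) ^ 2,
      fun i k => w z * Real.sin (Real.pi * ⟪A i - A k, z⟫_ℝ) ^ 2)) <| .of_forall fun z => by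
    have h0 : 0 ≤ w z := (abs_nonneg _).trans (h z)
    rw [hpoint]
    refine subset_closure (IsGenerator.smul (isGenerator_sinPair ?_ fun i k hE => ?_) h0)
    · rw [abs_div, abs_of_nonneg h0]
      exact div_le_one_of_le₀ (h z) h0
    · rw [hA i k hE]
  rwa [integral_symbolPair (fun i k => integrable_mul_sin_sq hu _)
    fun i k => integrable_mul_sin_sq hw _] at hmem

lemma integral_sinSqIntegral_pair_mem_closedGeneratorCone {ι : Type*} [Finite ι] (A : ι → V)
    {u w : V → ℝ} (hu : Integrable u) (hw : Integrable w) (h : ∀ z, |u z| ≤ w z)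
    (h2 : Integrable fun z => w z * ‖z‖ ^ 2) :
    (fun i k => ∫ r in Set.Ioi (0 : ℝ), (r ^ 2)⁻¹ * sinSqIntegral u (r • (A i - A k)),
      fun i k => ∫ r in Set.Ioi (0 : ℝ), (r ^ 2)⁻¹ * sinSqIntegral w (r • (A i - A k)))
      ∈ closedGeneratorCone A := by
  cases nonempty_fintype ι
  have hw_abs (z : V) : |w z| ≤ w z := (abs_of_nonneg ((abs_nonneg _).trans (h z))).le
  rw [← integral_symbolPair
    (fun i k => integrableOn_inv_sq_mul_sinSqIntegral hu hw h h2 (A i - A k))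
    fun i k => integrableOn_inv_sq_mul_sinSqIntegral hw hw hw_abs h2 (A i - A k)]
  refine integral_mem_properCone _ (.of_forall fun r => ?_)
  have hr : (0 : ℝ) ≤ (r ^ 2)⁻¹ := by positivity
  have hpair := sinSqIntegral_pair_mem_closedGeneratorCone (E := A) (A := fun i => r • A i)
    (fun i k hE => by rw [hE]) hu hw h
  simp only [← smul_sub] at hpair
  exact (closedGeneratorCone A).smul_mem hpair hr

lemma exists_integral_div_norm_mem_transferMultipliers [Nontrivial V] {g : 𝓢(V, ℝ)}
    (heven : ∀ a, g (-a) = g a) (hzero : g 0 = 0) :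
    ∃ C : ℝ, 0 < C ∧ ∀ (ι : Type*) [Finite ι] (A : ι → V),
      (fun i k => (∫ r in Set.Ioi (0 : ℝ), (r ^ 2)⁻¹ * g (r • (A i - A k))) / (C * ‖A i - A k‖))
        ∈ transferMultipliers ι := by
  obtain ⟨C, u, hC, hucont, hu_le, hrep⟩ := exists_eq_mul_sinSqIntegral heven hzero
  obtain ⟨c, hc, hnorm⟩ := exists_integral_inv_sq_mul_sinSqIntegral (V := V)
  have hu : Integrable u :=
    integrable_decayWeight.mono' hucont.aestronglyMeasurable (.of_forall hu_le)
  refine ⟨C * c, by positivity, fun ι _ A => ?_⟩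
  have hquot := div_mem_transferMultipliers_of_mem_closedGeneratorCone
    (integral_sinSqIntegral_pair_mem_closedGeneratorCone A hu integrable_decayWeight hu_le
      integrable_decayWeight_mul_norm_sq) fun i k hne => by
    simp only [hnorm]
    exact (mul_pos hc (norm_pos_iff.mpr (sub_ne_zero.mpr hne))).ne'
  convert hquot using 3 with i k
  simp only [hnorm, hrep, mul_left_comm _ C]
  rw [integral_const_mul, mul_assoc, mul_div_mul_left _ _ hC.ne']

end FiniteDimensional

/-! ### The multiplier of a Lipschitz function -/

/-- A smooth function on `ℝ`, positive on `(1, 4)` and vanishing elsewhere. It is composed with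
`‖·‖ ^ 2` to cut off homogeneous functions to an annulus. -/
noncomputable def annulusCutoff (s : ℝ) : ℝ :=
  Real.smoothTransition (s - 1) * Real.smoothTransition (4 - s)

lemma contDiff_annulusCutoff : ContDiff ℝ (⊤ : ℕ∞) annulusCutoff :=
  (Real.smoothTransition.contDiff.comp (contDiff_id.sub contDiff_const)).mul
    (Real.smoothTransition.contDiff.comp (contDiff_const.sub contDiff_id))

lemma annulusCutoff_of_le_one {s : ℝ} (h : s ≤ 1) : annulusCutoff s = 0 := by
  rw [annulusCutoff, Real.smoothTransition.zero_of_nonpos (sub_nonpos.mpr h), zero_mul]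

lemma annulusCutoff_of_four_le {s : ℝ} (h : 4 ≤ s) : annulusCutoff s = 0 := by
  rw [annulusCutoff, Real.smoothTransition.zero_of_nonpos (sub_nonpos.mpr h), mul_zero]

lemma annulusCutoff_nonneg (s : ℝ) : 0 ≤ annulusCutoff s :=
  mul_nonneg (Real.smoothTransition.nonneg _) (Real.smoothTransition.nonneg _)

lemma annulusCutoff_pos {s : ℝ} (h1 : 1 < s) (h4 : s < 4) : 0 < annulusCutoff s :=
  mul_pos (Real.smoothTransition.pos_of_pos (sub_pos.mpr h1))
    (Real.smoothTransition.pos_of_pos (sub_pos.mpr h4))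

lemma annulusCutoff_le_one (s : ℝ) : annulusCutoff s ≤ 1 :=
  mul_le_one₀ (Real.smoothTransition.le_one _) (Real.smoothTransition.nonneg _)
    (Real.smoothTransition.le_one _)

lemma integral_inv_sq_mul_annulusCutoff_pos :
    0 < ∫ r in Set.Ioi (0 : ℝ), (r ^ 2)⁻¹ * annulusCutoff (r ^ 2) := by
  have hcont : Continuous fun r : ℝ => annulusCutoff (r ^ 2) :=
    contDiff_annulusCutoff.continuous.comp (continuous_pow 2)
  have hle (r : ℝ) : |annulusCutoff (r ^ 2)| ≤ 1 * r ^ 2 := by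
    rw [abs_of_nonneg (annulusCutoff_nonneg _), one_mul]
    rcases le_total (r ^ 2) 1 with hr | hr
    · exact (annulusCutoff_of_le_one hr).trans_le (sq_nonneg r)
    · exact (annulusCutoff_le_one _).trans hr
  have hint := integrableOn_inv_sq_mul hcont.measurable (fun r _ => hle r) fun r _ =>
    (abs_of_nonneg (annulusCutoff_nonneg _)).trans_le (annulusCutoff_le_one (r ^ 2))
  rw [setIntegral_pos_iff_support_of_nonneg_ae
    (.of_forall fun r => mul_nonneg (by positivity) (annulusCutoff_nonneg _)) hint]
  have hvol : 0 < volume (Set.Ioo (1 : ℝ) 2) := by simp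
  refine hvol.trans_le (measure_mono fun r hr => ?_)
  have hr0 : 0 < r := one_pos.trans hr.1
  have hpos : 0 < annulusCutoff (r ^ 2) :=
    annulusCutoff_pos (by nlinarith [hr.1]) (by nlinarith [hr.2])
  exact ⟨(mul_pos (by positivity) hpos).ne', hr0⟩

variable {E : Type*} [NormedAddCommGroup E] [InnerProductSpace ℝ E]

/-- A smooth even function on `E × ℝ` with compact support which, on the cone `|t| ≤ ‖x‖`, equals
`t * ⟪e, x⟫ / ‖x‖ ^ 2` times a cutoff. -/
noncomputable def coneBump (e : E) (a : WithLp 2 (E × ℝ)) : ℝ :=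
  annulusCutoff (‖a‖ ^ 2) * (a.snd * ⟪e, a.fst⟫_ℝ)
    / (‖a.fst‖ ^ 2 + Real.smoothTransition (1 - 2 * ‖a.fst‖ ^ 2))

lemma contDiff_coneBump (e : E) : ContDiff ℝ (⊤ : ℕ∞) (coneBump e) := by
  have hfst : ContDiff ℝ (⊤ : ℕ∞) fun a : WithLp 2 (E × ℝ) => a.fst :=
    (WithLp.fstL 2 ℝ E ℝ).contDiff
  have hsnd : ContDiff ℝ (⊤ : ℕ∞) fun a : WithLp 2 (E × ℝ) => a.snd :=
    (WithLp.sndL 2 ℝ E ℝ).contDiff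
  refine ((contDiff_annulusCutoff.comp (contDiff_norm_sq ℝ)).mul
    (hsnd.mul (contDiff_const.inner ℝ hfst))).div ((hfst.norm_sq ℝ).add
      (Real.smoothTransition.contDiff.comp (contDiff_const.sub
        (contDiff_const.mul (hfst.norm_sq ℝ))))) fun a => ?_
  rcases (sq_nonneg ‖a.fst‖).eq_or_lt with h | h
  · simp [← h]
  · exact (add_pos_of_pos_of_nonneg h (Real.smoothTransition.nonneg _)).ne'

lemma hasCompactSupport_coneBump [FiniteDimensional ℝ E] (e : E) :
    HasCompactSupport (coneBump e) := by
  refine .of_support_subset_isCompact (isCompact_closedBall 0 2) fun a ha => ?_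
  rw [mem_closedBall_zero_iff]
  by_contra! h
  exact ha (by rw [coneBump, annulusCutoff_of_four_le (by nlinarith), zero_mul, zero_div])

lemma coneBump_neg (e : E) (a : WithLp 2 (E × ℝ)) : coneBump e (-a) = coneBump e a := by
  simp [coneBump]

lemma coneBump_zero (e : E) : coneBump e 0 = 0 := by simp [coneBump]

lemma coneBump_smul (e : E) {a : WithLp 2 (E × ℝ)} (ha : |a.snd| ≤ ‖a.fst‖) (r : ℝ) :
    coneBump e (r • a) = a.snd * ⟪e, a.fst⟫_ℝ / ‖a.fst‖ ^ 2 * annulusCutoff ((r * ‖a‖) ^ 2) := by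
  have hnorm : ‖r • a‖ ^ 2 = (r * ‖a‖) ^ 2 := by
    rw [norm_smul, mul_pow, Real.norm_eq_abs, sq_abs, mul_pow]
  rw [coneBump, hnorm]
  rcases le_total ((r * ‖a‖) ^ 2) 1 with h | h
  · simp [annulusCutoff_of_le_one h]
  have hfst : ‖(r • a).fst‖ ^ 2 = r ^ 2 * ‖a.fst‖ ^ 2 := by
    rw [WithLp.smul_fst, norm_smul, mul_pow, Real.norm_eq_abs, sq_abs]
  have hcone : 1 - 2 * (r ^ 2 * ‖a.fst‖ ^ 2) ≤ 0 := by
    have hsq : a.snd ^ 2 ≤ ‖a.fst‖ ^ 2 := sq_le_sq' (abs_le.mp ha).1 (abs_le.mp ha).2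
    rw [mul_pow, WithLp.prod_norm_sq_eq_of_L2, Real.norm_eq_abs, sq_abs] at h
    linarith [mul_le_mul_of_nonneg_left hsq (sq_nonneg r)]
  have hr : r ≠ 0 := by
    rintro rfl
    norm_num at h
  rw [hfst, Real.smoothTransition.zero_of_nonpos hcone, WithLp.smul_fst, WithLp.smul_snd,
    inner_smul_right, smul_eq_mul, add_zero, mul_mul_mul_comm, ← sq, mul_left_comm,
    mul_div_mul_left _ _ (pow_ne_zero 2 hr)]
  ring

lemma exists_integral_inv_sq_mul_coneBump :
    ∃ c : ℝ, 0 < c ∧ ∀ (e : E) (a : WithLp 2 (E × ℝ)), |a.snd| ≤ ‖a.fst‖ →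
      ∫ r in Set.Ioi (0 : ℝ), (r ^ 2)⁻¹ * coneBump e (r • a)
        = c * ‖a‖ * (a.snd * ⟪e, a.fst⟫_ℝ / ‖a.fst‖ ^ 2) := by
  refine ⟨_, integral_inv_sq_mul_annulusCutoff_pos, fun e a ha => ?_⟩
  rcases eq_or_ne a 0 with rfl | ha0
  · simp [coneBump_zero]
  simp only [coneBump_smul e ha, mul_left_comm _ (a.snd * _ / _)]
  rw [integral_const_mul, integral_Ioi_inv_sq_mul_comp_mul (fun s => annulusCutoff (s ^ 2))
    (norm_pos_iff.mpr ha0)]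
  ring

/-- The symbol `φ_f φ_e` of the paper at the points `x i`; on the diagonal and wherever
`x i = x k` it is `0` because `0 / 0 = 0`. -/
noncomputable def lipschitzSymbol {ι : Type*} (e : E) (f : E → ℝ) (x : ι → E) (i k : ι) : ℝ :=
  (f (x i) - f (x k)) * ⟪e, x i - x k⟫_ℝ / ‖x i - x k‖ ^ 2

lemma lipschitzSymbol_comm {ι : Type*} (e : E) (f : E → ℝ) (x : ι → E) (i k : ι) :
    lipschitzSymbol e f x i k = lipschitzSymbol e f x k i := by
  rw [lipschitzSymbol, lipschitzSymbol, norm_sub_rev, ← neg_sub (x k), inner_neg_right,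
    ← neg_sub (f (x k)), neg_mul_neg]

lemma exists_smul_lipschitzSymbol_mem_transferMultipliers [FiniteDimensional ℝ E]
    (e : E) : ∃ c : ℝ, 0 < c ∧ ∀ (ι : Type*) [Finite ι] (f : E → ℝ), LipschitzWith 1 f →
      ∀ x : ι → E, c • lipschitzSymbol e f x ∈ transferMultipliers ι := by
  borelize E
  obtain ⟨C, hC, hmem⟩ := exists_integral_div_norm_mem_transferMultipliers
    (g := (hasCompactSupport_coneBump e).toSchwartzMap (contDiff_coneBump e))
    (coneBump_neg e) (coneBump_zero e)
  obtain ⟨c, hc, hintegral⟩ := exists_integral_inv_sq_mul_coneBump (E := E)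
  refine ⟨c / C, by positivity, fun ι _ f hf x => ?_⟩
  -- The cone condition `|t| ≤ ‖x‖` holds for differences of points on the graph of `f`.
  convert hmem ι fun i => WithLp.toLp 2 (x i, f (x i)) with i k
  set a : WithLp 2 (E × ℝ) := WithLp.toLp 2 (x i, f (x i)) - WithLp.toLp 2 (x k, f (x k)) with ha
  have hcone : |a.snd| ≤ ‖a.fst‖ := by
    simpa [ha, dist_eq_norm] using hf.dist_le_mul (x i) (x k)
  have hsymbol : lipschitzSymbol e f x i k = a.snd * ⟪e, a.fst⟫_ℝ / ‖a.fst‖ ^ 2 := rfl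
  change c / C * _ = (∫ r in Set.Ioi (0 : ℝ), (r ^ 2)⁻¹ * coneBump e (r • a)) / (C * ‖a‖)
  rw [hintegral e a hcone, hsymbol]
  rcases eq_or_ne a 0 with h0 | h0
  · simp [h0]
  · have := norm_ne_zero_iff.mpr h0
    field_simp

lemma SchurBound.swap {p q C : ℝ} {m : Fin d → Fin d → ℝ} (hm : ∀ i k, m i k = m k i)
    (h : SchurBound p q C m) : SchurBound q p C m := by
  intro y w
  calc ∑ i, ∑ k, m i k * (y i k * w k i).re = ∑ i, ∑ k, m i k * (w i k * y k i).re := by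
        rw [sum_comm]
        simp only [hm, mul_comm (y _ _)]
    _ ≤ C * (schattenSum q y / q + schattenSum p w / p) := by
        rw [add_comm]
        exact h w y

lemma schurBound_of_smul {p q C c : ℝ} {m : Fin d → Fin d → ℝ} (hc : 0 < c)
    (h : SchurBound p q C (c • m)) : SchurBound p q (C / c) m := by
  intro y w
  have := h y w
  simp only [Pi.smul_apply, smul_eq_mul, mul_assoc, ← mul_sum] at this
  rwa [div_mul_eq_mul_div, le_div_iff₀' hc]

lemma reTrace_schurMul (m : Fin d → Fin d → ℝ) (y w : Matrix (Fin d) (Fin d) ℂ) :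
    reTrace ((of fun i k => ((m i k : ℝ) : ℂ) * y i k) * w)
      = ∑ i, ∑ k, m i k * (y i k * w k i).re := by
  simp [reTrace, trace, Matrix.mul_apply, mul_assoc]

lemma SchurBound.schattenSum_le {p q C : ℝ} (hpq : p.HolderConjugate q) (hC : 0 < C)
    {m : Fin d → Fin d → ℝ} (h : SchurBound p q C m) (y : Matrix (Fin d) (Fin d) ℂ) :
    schattenSum p (of fun i k => ((m i k : ℝ) : ℂ) * y i k) ≤ C ^ p * schattenSum p y := by
  set z : Matrix (Fin d) (Fin d) ℂ := of fun i k => ((m i k : ℝ) : ℂ) * y i k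
  obtain ⟨w, hw_trace, hw_norm⟩ := exists_reTrace_mul_eq_schattenSum z hpq
  set t := C ^ (1 / q)
  have ht : t ≠ 0 := (Real.rpow_pos_of_pos hC _).ne'
  have hpair : ∑ i, ∑ k, m i k * ((t • y) i k * (t⁻¹ • w) k i).re = schattenSum p z := by
    rw [← hw_trace, reTrace_schurMul]
    simp only [Matrix.smul_apply, smul_mul_smul_comm, mul_inv_cancel₀ ht, one_smul]
  have hyoung : schattenSum p z
      ≤ C * (C ^ (p - 1) / p * schattenSum p y + C⁻¹ / q * schattenSum p z) := by
    have := h (t • y) (t⁻¹ • w)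
    rwa [hpair, schattenSum_smul_div_add_inv_smul_div hpq hC, hw_norm] at this
  have habsorb : p⁻¹ * schattenSum p z ≤ p⁻¹ * (C ^ p * schattenSum p y) := by
    have hpow : C * C ^ (p - 1) = C ^ p := by
      rw [Real.rpow_sub_one hC.ne', mul_div_cancel₀ _ hC.ne']
    calc p⁻¹ * schattenSum p z = schattenSum p z - q⁻¹ * schattenSum p z := by
          rw [← hpq.one_sub_inv]; ring
      _ ≤ C * (C ^ (p - 1) / p * schattenSum p y + C⁻¹ / q * schattenSum p z)
          - q⁻¹ * schattenSum p z := by gcongr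
      _ = p⁻¹ * (C ^ p * schattenSum p y) := by rw [← hpow]; field_simp; ring
  exact le_of_mul_le_mul_left habsorb (inv_pos.mpr hpq.pos)

lemma SchurBound.schattenNorm_le {p q C : ℝ} (hpq : p.HolderConjugate q) (hC : 0 < C)
    {m : Fin d → Fin d → ℝ} (h : SchurBound p q C m) (y : Matrix (Fin d) (Fin d) ℂ) :
    schattenNorm p (of fun i k => ((m i k : ℝ) : ℂ) * y i k) ≤ C * schattenNorm p y := by
  have hroot := Real.rpow_le_rpow (schattenSum_nonneg _ _) (h.schattenSum_le hpq hC y)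
    (one_div_nonneg.mpr hpq.nonneg)
  rwa [Real.mul_rpow (by positivity) (schattenSum_nonneg _ _), ← Real.rpow_mul hC.le,
    mul_one_div_cancel hpq.ne_zero, Real.rpow_one] at hroot

lemma exists_schurBound_lipschitzSymbol [FiniteDimensional ℝ E] (e : E) :
    ∃ C : ℝ, 0 < C ∧ ∀ p q : ℝ, p.HolderConjugate q → p ≤ 2 → ∀ (d : ℕ) (f : E → ℝ),
      LipschitzWith 1 f → ∀ x : Fin d → E,
        SchurBound p q (C / (p - 1)) (lipschitzSymbol e f x) := by
  obtain ⟨C, hC, hstrong⟩ := exists_strongTypeOn_univ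
  obtain ⟨c, hc, hmem⟩ := exists_smul_lipschitzSymbol_mem_transferMultipliers e
  refine ⟨C / c, by positivity, fun p q hpq hp2 d f hf x => ?_⟩
  have hp1 : 0 < p - 1 := hpq.sub_one_pos
  have hone : 1 ≤ C / (p - 1) := (one_le_div hp1).mpr (by linarith)
  rw [div_right_comm]
  exact schurBound_of_smul hc <|
    schurBound_of_mem_transferMultipliers hpq hone (hstrong p hpq.lt hp2 d) (hmem _ f hf x)

lemma lipschitzWith_comp_ofLp {n : ℕ} {f : (Fin n → ℝ) → ℝ}
    (hf : ∀ ξ ξ' : Fin n → ℝ, |f ξ - f ξ'| ≤ √(∑ i, (ξ i - ξ' i) ^ 2)) :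
    LipschitzWith 1 fun ξ : EuclideanSpace ℝ (Fin n) => f ξ.ofLp :=
  .of_dist_le_mul fun ξ ξ' => by
    simpa [EuclideanSpace.dist_eq, Real.dist_eq, sq_abs] using hf ξ.ofLp ξ'.ofLp

lemma lipschitzSymbol_single {ι : Type*} {n : ℕ} (j : Fin n) (f : (Fin n → ℝ) → ℝ)
    (x : ι → Fin n → ℝ) (i k : ι) :
    lipschitzSymbol (EuclideanSpace.single j 1) (fun ξ => f ξ.ofLp)
        (fun i => WithLp.toLp 2 (x i)) i k
      = if x i = x k then 0 else
        (f (x i) - f (x k)) * (x i j - x k j) / ∑ l, (x i l - x k l) ^ 2 := by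
  split_ifs with h
  · simp [lipschitzSymbol, h]
  · simp [lipschitzSymbol, EuclideanSpace.norm_sq_eq, EuclideanSpace.inner_single_left]

theorem _root_.schur_multiplier_schatten_bound_general [FiniteDimensional ℝ E] (e : E) :
    ∃ C : ℝ, 0 < C ∧ ∀ p : ℝ, 1 < p → ∀ (d : ℕ) (f : E → ℝ), LipschitzWith 1 f →
      ∀ (x : Fin d → E) (y : Matrix (Fin d) (Fin d) ℂ),
        schattenNorm p (of fun i k => ((lipschitzSymbol e f x i k : ℝ) : ℂ) * y i k)
          ≤ C * (p ^ 2 / (p - 1)) * schattenNorm p y := by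
  obtain ⟨C, hC, hbound⟩ := exists_schurBound_lipschitzSymbol e
  refine ⟨C, hC, fun p hp d f hf x y => ?_⟩
  have hp1 : 0 < p - 1 := sub_pos.mpr hp
  have hpq := Real.HolderConjugate.conjExponent hp
  have hnorm : 0 ≤ schattenNorm p y := Real.rpow_nonneg (schattenSum_nonneg p y) _
  suffices h : ∃ B, 0 < B ∧ B ≤ C * (p ^ 2 / (p - 1)) ∧
      SchurBound p p.conjExponent B (lipschitzSymbol e f x) by
    obtain ⟨B, hB, hBC, hB_bound⟩ := h
    exact (hB_bound.schattenNorm_le hpq hB y).trans (mul_le_mul_of_nonneg_right hBC hnorm)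
  rcases le_total p 2 with hp2 | hp2
  · refine ⟨C / (p - 1), by positivity, ?_, hbound p _ hpq hp2 d f hf x⟩
    rw [mul_div_assoc']
    gcongr
    exact le_mul_of_one_le_right hC.le (one_le_pow₀ hp.le)
  · have hconj : p.conjExponent - 1 = (p - 1)⁻¹ := by
      rw [Real.conjExponent]
      field_simp
      ring
    have hq2 : p.conjExponent ≤ 2 := by
      linarith [inv_le_one_of_one_le₀ (show 1 ≤ p - 1 by linarith)]
    refine ⟨C * (p - 1), by positivity, ?_, ?_⟩
    · gcongr
      rw [le_div_iff₀ hp1]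
      nlinarith
    · have hdual := hbound _ p hpq.symm hq2 d f hf x
      rw [hconj, div_inv_eq_mul] at hdual
      exact hdual.swap (lipschitzSymbol_comm e f x)

end SchurMultiplier

/-- Finite-dimensional form of Theorem 5.1 of the paper: the Schur multiplier with symbol
`φ_f·φ_j` has Schatten-`p` norm of order `p²/(p−1)`, with a constant depending only on
`n`. -/
theorem schur_multiplier_schatten_bound (n : ℕ) (hn : 1 ≤ n) (j : Fin n) :
    ∃ C : ℝ, 0 < C ∧ ∀ (p : ℝ), 1 < p → ∀ (d : ℕ), 1 ≤ d →
      ∀ (f : (Fin n → ℝ) → ℝ),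
        (∀ ξ ξ' : Fin n → ℝ, |f ξ - f ξ'| ≤ Real.sqrt (∑ i, (ξ i - ξ' i) ^ 2)) →
      ∀ (lam : Fin d → Fin n → ℝ) (y : Matrix (Fin d) (Fin d) ℂ),
        schattenNorm p
            (Matrix.of fun i k : Fin d =>
              (((if lam i = lam k then 0 else
                (f (lam i) - f (lam k)) * (lam i j - lam k j)
                  / ∑ l, (lam i l - lam k l) ^ 2) : ℝ) : ℂ) * y i k)
          ≤ C * (p ^ 2 / (p - 1)) * schattenNorm p y := by
  obtain ⟨C, hC, hbound⟩ := schur_multiplier_schatten_bound_general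
    (EuclideanSpace.single j (1 : ℝ))
  refine ⟨C, hC, fun p hp d _ f hf lam y => ?_⟩
  simpa only [SchurMultiplier.lipschitzSymbol_single] using
    hbound p hp d _ (SchurMultiplier.lipschitzWith_comp_ofLp hf) (fun i => WithLp.toLp 2 (lam i)) y
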